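/- arXiv:1310.4450 — 8 statements merged into one kernel-verified Lean document; each statement's English description precedes it below -/
import Mathlib

section
/- Let K : ℝⁿ × ℝⁿ × ℝⁿ → ℝ be a second-order Finsler–Kawaguchi function that is continuous on ℝⁿ × ℝⁿ × ℝⁿ and C^∞ on the open set where the second slot y ≠ 0. Let t₁ < t₂ and let σ : ℝ → ℝⁿ be C^∞ with σ′(t) ≠ 0 for all t ∈ [t₁, t₂]. Call σ a second-order extremal of the action of K on [t₁, t₂] if for every C^∞ map γ : ℝ × ℝ → ℝⁿ with γ(0, t) = σ(t) for all t ∈ [t₁, t₂] that fixes the lifted endpoints, i.e. γ(s, tᵢ) = σ(tᵢ) and ∂γ/∂t(s, tᵢ) = σ′(tᵢ) for all s ∈ ℝ and i = 1, 2, the function s ↦ ∫_{t₁}^{t₂} K(γ(s, t), ∂γ/∂t(s, t), ∂²γ/∂t²(s, t)) dt has derivative 0 at s = 0. Then σ is a second-order extremal if and only if σ satisfies the second-order Euler–Lagrange equations of K on [t₁, t₂], i.e. E₂(t) = 0 for all t ∈ [t₁, t₂]. -/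
open intervalIntegral

/-- The second-order Euler–Lagrange covector of a second-order Finsler–Kawaguchi function `K`
along a curve `σ`, evaluated at time `t` on the test vector `h`:
`E₂(t)(h) = (D_x(D_yK)(σ²(t))(h))(σ′(t)) + 2·(D_x(D_zK)(σ²(t))(h))(σ″(t))
  − d/dt [D_yK(σ²(t))(h)] + d²/dt² [D_zK(σ²(t))(h)]`,
where `σ²(t) = (σ(t), σ′(t), σ″(t))`. -/
noncomputable def eulerLagrange₂ (n : ℕ)
    (K : EuclideanSpace ℝ (Fin n) × EuclideanSpace ℝ (Fin n) × EuclideanSpace ℝ (Fin n) → ℝ)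
    (σ : ℝ → EuclideanSpace ℝ (Fin n)) (t : ℝ) (h : EuclideanSpace ℝ (Fin n)) : ℝ :=
  (fderiv ℝ (fun x => fderiv ℝ (fun y => K (x, y, deriv (deriv σ) t)) (deriv σ t)) (σ t)) h
      (deriv σ t)
    + 2 * ((fderiv ℝ (fun x => fderiv ℝ (fun z => K (x, deriv σ t, z)) (deriv (deriv σ) t))
        (σ t)) h (deriv (deriv σ) t))
    - deriv (fun s => fderiv ℝ (fun y => K (σ s, y, deriv (deriv σ) s)) (deriv σ s) h) t
    + deriv (deriv (fun s => fderiv ℝ (fun z => K (σ s, deriv σ s, z)) (deriv (deriv σ) s) h)) t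

/-!
For a Lagrangian `L` that is smooth near the lift of `σ`, differentiating the action under the
integral sign and integrating by parts twice expresses the first variation as the pairing of the
variation field with the covector `D_xL - d/dt D_yL + d²/dt² D_zL`. Fixing the lifted endpoints
removes the boundary terms, and the fundamental lemma of the calculus of variations shows that the
extremals are the zeros of this covector.

Homogeneity enters only afterwards. Euler's identity `D_yK(y) + 2 D_zK(z) = K`, differentiated in
the direction `x`, gives `D_x(D_yK)(h)(y) + 2 D_x(D_zK)(h)(z) = D_xK(h)`, which turns the covector
above into `E₂`.
-/

section Calculus

open Set MeasureTheory
open scoped ContDiff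

variable {𝕜 E F : Type*} [RCLike 𝕜] [NormedAddCommGroup E] [NormedSpace ℝ E]
  [NormedAddCommGroup F] [NormedSpace ℝ F]

theorem eqOn_deriv_of_uniqueDiffOn {f g : ℝ → E} {s : Set ℝ} (hs : UniqueDiffOn ℝ s)
    (hf : Differentiable ℝ f) (hg : Differentiable ℝ g) (hfg : EqOn f g s) :
    EqOn (deriv f) (deriv g) s := fun t ht => by
  rw [← (hf t).derivWithin (hs t ht), ← (hg t).derivWithin (hs t ht)]
  exact derivWithin_congr hfg (hfg ht)

theorem hasDerivAt_integral_of_continuousOn_of_isOpen [NormedSpace 𝕜 F] {f f' : 𝕜 × ℝ → F}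
    {O : Set (𝕜 × ℝ)} {s₀ : 𝕜} {a b : ℝ} (hO : IsOpen O) (hsub : ∀ t ∈ uIcc a b, (s₀, t) ∈ O)
    (hf : ContinuousOn f O) (hf' : ContinuousOn f' O)
    (hderiv : ∀ p ∈ O, HasDerivAt (fun s => f (s, p.2)) (f' p) p.1) :
    HasDerivAt (fun s => ∫ t in a..b, f (s, t)) (∫ t in a..b, f' (s₀, t)) s₀ := by
  obtain ⟨V, W, hV, -, hsV, hIW, hVW⟩ := generalized_tube_lemma
    (isCompact_singleton (x := s₀)) (isCompact_uIcc (a := a) (b := b)) hO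
    (by rintro ⟨s, t⟩ ⟨rfl, ht⟩; exact hsub t ht)
  obtain ⟨ε, hε, hεV⟩ := Metric.nhds_basis_closedBall.mem_iff.1
    (hV.mem_nhds (hsV (mem_singleton _)))
  have hmem : Metric.closedBall s₀ ε ×ˢ uIcc a b ⊆ O :=
    fun p hp => hVW ⟨hεV hp.1, hIW hp.2⟩
  have hslice {g : 𝕜 × ℝ → F} (hg : ContinuousOn g O) {s : 𝕜} (hs : s ∈ Metric.closedBall s₀ ε) :
      ContinuousOn (fun t => g (s, t)) (uIcc a b) :=
    hg.comp (by fun_prop) fun t ht => hmem ⟨hs, ht⟩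
  have hmeas {g : 𝕜 × ℝ → F} (hg : ContinuousOn g O) {s : 𝕜} (hs : s ∈ Metric.closedBall s₀ ε) :
      AEStronglyMeasurable (fun t => g (s, t)) (volume.restrict (uIoc a b)) :=
    ((hslice hg hs).mono uIoc_subset_uIcc).aestronglyMeasurable measurableSet_uIoc
  have hs₀ : s₀ ∈ Metric.closedBall s₀ ε := Metric.mem_closedBall_self hε.le
  obtain ⟨C, hC⟩ := ((isCompact_closedBall s₀ ε).prod isCompact_uIcc).exists_bound_of_continuousOn
    (hf'.mono hmem)
  refine (intervalIntegral.hasDerivAt_integral_of_dominated_loc_of_deriv_le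
    (F := fun s t => f (s, t)) (F' := fun s t => f' (s, t)) (bound := fun _ => C)
    (Metric.closedBall_mem_nhds s₀ hε) ?_ (hslice hf hs₀).intervalIntegrable (hmeas hf' hs₀)
    (.of_forall fun t ht s hs => hC (s, t) ⟨hs, uIoc_subset_uIcc ht⟩) intervalIntegrable_const
    (.of_forall fun t ht s hs => hderiv (s, t) (hmem ⟨hs, uIoc_subset_uIcc ht⟩))).2
  filter_upwards [Metric.closedBall_mem_nhds s₀ hε] with s hs using hmeas hf hs

theorem integral_clm_apply_deriv_eq_neg [CompleteSpace F] {A A' : ℝ → E →L[ℝ] F} {w w' : ℝ → E}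
    {a b : ℝ} (hA : ∀ t ∈ uIcc a b, HasDerivAt A (A' t) t)
    (hw : ∀ t ∈ uIcc a b, HasDerivAt w (w' t) t) (hA' : ContinuousOn A' (uIcc a b))
    (hw' : ContinuousOn w' (uIcc a b)) (ha : w a = 0) (hb : w b = 0) :
    ∫ t in a..b, A t (w' t) = -∫ t in a..b, A' t (w t) := by
  have hAc : ContinuousOn A (uIcc a b) := fun t ht => (hA t ht).continuousAt.continuousWithinAt
  have hwc : ContinuousOn w (uIcc a b) := fun t ht => (hw t ht).continuousAt.continuousWithinAt
  have hi := (hA'.clm_apply hwc).intervalIntegrable (μ := volume)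
  have hi' := (hAc.clm_apply hw').intervalIntegrable (μ := volume)
  have hftc := intervalIntegral.integral_eq_sub_of_hasDerivAt
    (fun t ht => (hA t ht).clm_apply (hw t ht)) (hi.add hi')
  rw [intervalIntegral.integral_add hi hi', ha, hb, map_zero, map_zero, sub_zero] at hftc
  exact eq_neg_of_add_eq_zero_right hftc

theorem integral_clm_apply_add_deriv_add_deriv_deriv_eq [CompleteSpace F]
    {A B B' C C' C'' : ℝ → E →L[ℝ] F} {w w' w'' : ℝ → E} {a b : ℝ} (hA : ContinuousOn A (uIcc a b))
    (hB : ∀ t ∈ uIcc a b, HasDerivAt B (B' t) t) (hC : ∀ t ∈ uIcc a b, HasDerivAt C (C' t) t)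
    (hC' : ∀ t ∈ uIcc a b, HasDerivAt C' (C'' t) t) (hB'c : ContinuousOn B' (uIcc a b))
    (hC''c : ContinuousOn C'' (uIcc a b)) (hw : ∀ t ∈ uIcc a b, HasDerivAt w (w' t) t)
    (hw' : ∀ t ∈ uIcc a b, HasDerivAt w' (w'' t) t) (hw''c : ContinuousOn w'' (uIcc a b))
    (ha : w a = 0) (hb : w b = 0) (ha' : w' a = 0) (hb' : w' b = 0) :
    ∫ t in a..b, (A t (w t) + B t (w' t) + C t (w'' t)) =
      ∫ t in a..b, (A t - B' t + C'' t) (w t) := by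
  have hBc : ContinuousOn B (uIcc a b) := fun t ht => (hB t ht).continuousAt.continuousWithinAt
  have hCc : ContinuousOn C (uIcc a b) := fun t ht => (hC t ht).continuousAt.continuousWithinAt
  have hC'c : ContinuousOn C' (uIcc a b) := fun t ht => (hC' t ht).continuousAt.continuousWithinAt
  have hwc : ContinuousOn w (uIcc a b) := fun t ht => (hw t ht).continuousAt.continuousWithinAt
  have hw'c : ContinuousOn w' (uIcc a b) := fun t ht => (hw' t ht).continuousAt.continuousWithinAt
  have hint {P : ℝ → E →L[ℝ] F} {v : ℝ → E} (hP : ContinuousOn P (uIcc a b))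
      (hv : ContinuousOn v (uIcc a b)) : IntervalIntegrable (fun t => P t (v t)) volume a b :=
    (hP.clm_apply hv).intervalIntegrable
  have hfirst : ∫ t in a..b, B t (w' t) = -∫ t in a..b, B' t (w t) :=
    integral_clm_apply_deriv_eq_neg hB hw hB'c hw'c ha hb
  have hsecond : ∫ t in a..b, C t (w'' t) = ∫ t in a..b, C'' t (w t) := by
    rw [integral_clm_apply_deriv_eq_neg hC hw' hC'c hw''c ha' hb',
      integral_clm_apply_deriv_eq_neg hC' hw hC''c hw'c ha hb, neg_neg]
  simp only [add_apply, sub_apply]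
  rw [intervalIntegral.integral_add ((hint hA hwc).add (hint hBc hw'c)) (hint hCc hw''c),
    intervalIntegral.integral_add (hint hA hwc) (hint hBc hw'c),
    intervalIntegral.integral_add ((hint hA hwc).sub (hint hB'c hwc)) (hint hC''c hwc),
    intervalIntegral.integral_sub (hint hA hwc) (hint hB'c hwc),
    hfirst, hsecond, sub_eq_add_neg]

theorem eqOn_zero_of_forall_integral_contDiff_smul_eq_zero [CompleteSpace F] {g : ℝ → F}
    {a b : ℝ} (hab : a < b) (hg : ContinuousOn g (Icc a b))
    (h : ∀ φ : ℝ → ℝ, ContDiff ℝ ∞ φ → tsupport φ ⊆ Ioo a b → ∫ t in a..b, φ t • g t = 0) :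
    EqOn g 0 (Icc a b) := by
  have hae : ∀ᵐ t, t ∈ Ioo a b → g t = 0 := by
    refine isOpen_Ioo.ae_eq_zero_of_integral_contDiff_smul_eq_zero
      ((hg.mono Ioo_subset_Icc_self).locallyIntegrableOn measurableSet_Ioo) fun φ hφ _ hsupp => ?_
    rw [← h φ hφ hsupp, intervalIntegral.integral_of_le hab.le,
      setIntegral_eq_integral_of_forall_compl_eq_zero]
    intro t ht
    rw [image_eq_zero_of_notMem_tsupport fun h' => ht (Ioo_subset_Ioc_self (hsupp h')), zero_smul]
  have hae' : g =ᵐ[volume.restrict (Icc a b)] 0 := by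
    rw [← Measure.restrict_congr_set Ioo_ae_eq_Icc]
    exact (ae_restrict_iff' measurableSet_Ioo).2 hae
  exact Measure.eqOn_Icc_of_ae_eq volume hab.ne hae' hg continuousOn_const

end Calculus

section PartialDerivatives

variable {E : Type*} [NormedAddCommGroup E] [NormedSpace ℝ E] {γ : ℝ × ℝ → E}

/-- The partial derivative of a two-parameter map in its first parameter, which is `s` for a
variation `γ (s, t)`. -/
noncomputable def derivFst (γ : ℝ × ℝ → E) (p : ℝ × ℝ) : E :=
  deriv (fun s => γ (s, p.2)) p.1

/-- The partial derivative of a two-parameter map in its second parameter, which is the time `t`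
for a variation `γ (s, t)`. -/
noncomputable def derivSnd (γ : ℝ × ℝ → E) (p : ℝ × ℝ) : E :=
  deriv (fun t => γ (p.1, t)) p.2

theorem hasDerivAt_fst_fderiv {p : ℝ × ℝ} (hγ : DifferentiableAt ℝ γ p) :
    HasDerivAt (fun s => γ (s, p.2)) (fderiv ℝ γ p (1, 0)) p.1 :=
  HasFDerivAt.comp_hasDerivAt p.1 hγ.hasFDerivAt
    ((hasDerivAt_id p.1).prodMk (hasDerivAt_const p.1 p.2))

theorem hasDerivAt_snd_fderiv {p : ℝ × ℝ} (hγ : DifferentiableAt ℝ γ p) :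
    HasDerivAt (fun t => γ (p.1, t)) (fderiv ℝ γ p (0, 1)) p.2 :=
  HasFDerivAt.comp_hasDerivAt p.2 hγ.hasFDerivAt
    ((hasDerivAt_const p.2 p.1).prodMk (hasDerivAt_id p.2))

theorem derivFst_eq_fderiv (hγ : Differentiable ℝ γ) :
    derivFst γ = fun p => fderiv ℝ γ p (1, 0) :=
  funext fun p => (hasDerivAt_fst_fderiv (hγ p)).deriv

theorem derivSnd_eq_fderiv (hγ : Differentiable ℝ γ) :
    derivSnd γ = fun p => fderiv ℝ γ p (0, 1) :=
  funext fun p => (hasDerivAt_snd_fderiv (hγ p)).deriv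

theorem hasDerivAt_derivFst (hγ : Differentiable ℝ γ) (s t : ℝ) :
    HasDerivAt (fun s => γ (s, t)) (derivFst γ (s, t)) s :=
  (hasDerivAt_fst_fderiv (hγ (s, t))).differentiableAt.hasDerivAt

theorem contDiff_derivFst {m n : WithTop ℕ∞} (hγ : ContDiff ℝ n γ) (hmn : m + 1 ≤ n) :
    ContDiff ℝ m (derivFst γ) := by
  rw [derivFst_eq_fderiv ((hγ.of_le (le_trans le_add_self hmn)).differentiable one_ne_zero)]
  exact (hγ.fderiv_right hmn).clm_apply contDiff_const

theorem contDiff_derivSnd {m n : WithTop ℕ∞} (hγ : ContDiff ℝ n γ) (hmn : m + 1 ≤ n) :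
    ContDiff ℝ m (derivSnd γ) := by
  rw [derivSnd_eq_fderiv ((hγ.of_le (le_trans le_add_self hmn)).differentiable one_ne_zero)]
  exact (hγ.fderiv_right hmn).clm_apply contDiff_const

theorem derivFst_derivSnd_comm (hγ : ContDiff ℝ 2 γ) :
    derivFst (derivSnd γ) = derivSnd (derivFst γ) := by
  have hdiff : Differentiable ℝ γ := hγ.differentiable two_ne_zero
  have hdiff' : Differentiable ℝ (fderiv ℝ γ) :=
    (hγ.fderiv_right (m := 1) (by norm_num)).differentiable one_ne_zero
  funext p
  have hsymm : IsSymmSndFDerivAt ℝ γ p := hγ.contDiffAt.isSymmSndFDerivAt (by simp)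
  rw [derivFst_eq_fderiv ((contDiff_derivSnd hγ (m := 1) (by norm_num)).differentiable one_ne_zero),
    derivSnd_eq_fderiv ((contDiff_derivFst hγ (m := 1) (by norm_num)).differentiable one_ne_zero),
    derivFst_eq_fderiv hdiff, derivSnd_eq_fderiv hdiff]
  simpa [fderiv_clm_apply (hdiff' p) (differentiableAt_const _)] using hsymm (1, 0) (0, 1)

theorem derivFst_eq_zero_of_forall_eq {c : E} {t : ℝ} (h : ∀ s, γ (s, t) = c) (s : ℝ) :
    derivFst γ (s, t) = 0 := by
  simp [derivFst, h]

theorem deriv_derivFst_eq_zero_of_forall_eq (hγ : ContDiff ℝ 2 γ) {c : E} {t : ℝ}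
    (h : ∀ s, deriv (fun t => γ (s, t)) t = c) (s : ℝ) :
    deriv (fun t => derivFst γ (s, t)) t = 0 := by
  change derivSnd (derivFst γ) (s, t) = 0
  rw [← derivFst_derivSnd_comm hγ]
  exact derivFst_eq_zero_of_forall_eq h s

end PartialDerivatives

section SecondLift

open Set

variable {E : Type*} [NormedAddCommGroup E] [NormedSpace ℝ E] {σ : ℝ → E} {γ : ℝ × ℝ → E}

/-- The second-order lift `σ² = (σ, σ′, σ″)` of a curve. -/
noncomputable def secondLift (σ : ℝ → E) (t : ℝ) : E × E × E :=
  (σ t, deriv σ t, deriv (deriv σ) t)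

/-- The second-order lifts of the curves `t ↦ γ (s, t)`, as a function of both parameters. -/
noncomputable def familyLift (γ : ℝ × ℝ → E) (p : ℝ × ℝ) : E × E × E :=
  secondLift (fun t => γ (p.1, t)) p.2

theorem contDiff_secondLift {n : WithTop ℕ∞} (hσ : ContDiff ℝ (n + 2) σ) :
    ContDiff ℝ n (secondLift σ) := by
  have hσ' : ContDiff ℝ (n + 1) (deriv σ) :=
    ContDiff.deriv' (by rwa [add_assoc, one_add_one_eq_two])
  exact (hσ.of_le le_self_add).prodMk ((hσ'.of_le le_self_add).prodMk hσ'.deriv')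

theorem eqOn_secondLift {c : ℝ → E} {s : Set ℝ} (hs : UniqueDiffOn ℝ s) (hc : ContDiff ℝ 2 c)
    (hσ : ContDiff ℝ 2 σ) (h : EqOn c σ s) : EqOn (secondLift c) (secondLift σ) s := by
  have h' := eqOn_deriv_of_uniqueDiffOn hs (hc.differentiable two_ne_zero)
    (hσ.differentiable two_ne_zero) h
  have h'' := eqOn_deriv_of_uniqueDiffOn hs hc.differentiable_deriv_two
    hσ.differentiable_deriv_two h'
  exact fun t ht => Prod.ext (h ht) (Prod.ext (h' ht) (h'' ht))

theorem contDiff_familyLift {n : WithTop ℕ∞} (hγ : ContDiff ℝ (n + 2) γ) :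
    ContDiff ℝ n (familyLift γ) := by
  have hγ' : ContDiff ℝ (n + 1) (derivSnd γ) :=
    contDiff_derivSnd hγ (by rw [add_assoc, one_add_one_eq_two])
  exact (hγ.of_le le_self_add).prodMk
    ((hγ'.of_le le_self_add).prodMk (contDiff_derivSnd hγ' le_rfl))

theorem hasDerivAt_familyLift (hγ : ContDiff ℝ 3 γ) (s t : ℝ) :
    HasDerivAt (fun s => familyLift γ (s, t)) (familyLift (derivFst γ) (s, t)) s := by
  have hγ' : ContDiff ℝ 2 (derivSnd γ) := contDiff_derivSnd hγ (by norm_num)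
  have hγ'' : ContDiff ℝ 1 (derivSnd (derivSnd γ)) := contDiff_derivSnd hγ' (by norm_num)
  have hcomm : derivFst (derivSnd γ) = derivSnd (derivFst γ) :=
    derivFst_derivSnd_comm (hγ.of_le (by norm_num))
  have hcomm' : derivFst (derivSnd (derivSnd γ)) = derivSnd (derivSnd (derivFst γ)) := by
    rw [derivFst_derivSnd_comm hγ', hcomm]
  have h' := hasDerivAt_derivFst (hγ'.differentiable two_ne_zero) s t
  have h'' := hasDerivAt_derivFst (hγ''.differentiable one_ne_zero) s t
  rw [hcomm] at h'
  rw [hcomm'] at h''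
  exact (hasDerivAt_derivFst (hγ.differentiable three_ne_zero) s t).prodMk (h'.prodMk h'')

end SecondLift

section FirstVariation

open Set
open scoped ContDiff

variable {E : Type*} [NormedAddCommGroup E] [NormedSpace ℝ E] {L : E × E × E → ℝ}
  {U : Set (E × E × E)} {σ η : ℝ → E} {γ : ℝ × ℝ → E} {a b : ℝ}

/-- The inclusion of the first slot `x` of `(x, y, z)`. -/
abbrev inPosition (E : Type*) [NormedAddCommGroup E] [NormedSpace ℝ E] : E →L[ℝ] E × E × E :=
  .inl ℝ E (E × E)

/-- The inclusion of the second slot `y` of `(x, y, z)`. -/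
abbrev inVelocity (E : Type*) [NormedAddCommGroup E] [NormedSpace ℝ E] : E →L[ℝ] E × E × E :=
  (ContinuousLinearMap.inr ℝ E (E × E)).comp (.inl ℝ E E)

/-- The inclusion of the third slot `z` of `(x, y, z)`. -/
abbrev inAcceleration (E : Type*) [NormedAddCommGroup E] [NormedSpace ℝ E] : E →L[ℝ] E × E × E :=
  (ContinuousLinearMap.inr ℝ E (E × E)).comp (.inr ℝ E E)

/-- The partial derivative of `L` along the lifted curve `σ²`, in the slot selected by the
inclusion `ι`. -/
noncomputable def partialAlong (L : E × E × E → ℝ) (σ : ℝ → E) (ι : E →L[ℝ] E × E × E) (t : ℝ) :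
    E →L[ℝ] ℝ :=
  (fderiv ℝ L (secondLift σ t)).comp ι

/-- The Euler–Lagrange covector `D_xL - d/dt D_yL + d²/dt² D_zL` of an arbitrary second-order
Lagrangian `L` along `σ`. -/
noncomputable def lagrangianCovector (L : E × E × E → ℝ) (σ : ℝ → E) (t : ℝ) : E →L[ℝ] ℝ :=
  partialAlong L σ (inPosition E) t - deriv (partialAlong L σ (inVelocity E)) t
    + deriv (deriv (partialAlong L σ (inAcceleration E))) t

/-- The second-order action `∫ L(σ²)` of a curve. -/
noncomputable def secondOrderAction (L : E × E × E → ℝ) (a b : ℝ) (σ : ℝ → E) : ℝ :=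
  ∫ t in a..b, L (secondLift σ t)

/-- A smooth variation `γ (s, t)` of the curve `σ` on `[a, b]` that keeps the lifted endpoints
`(σ, σ′)` fixed; the variation parameter `s` comes first. -/
structure IsLiftedVariation (γ : ℝ × ℝ → E) (σ : ℝ → E) (a b : ℝ) : Prop where
  contDiff : ContDiff ℝ ∞ γ
  zero_eq : ∀ t ∈ Icc a b, γ (0, t) = σ t
  left_eq : ∀ s, γ (s, a) = σ a
  right_eq : ∀ s, γ (s, b) = σ b
  deriv_left_eq : ∀ s, deriv (fun t => γ (s, t)) a = deriv σ a
  deriv_right_eq : ∀ s, deriv (fun t => γ (s, t)) b = deriv σ b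

/-- A curve at which the second-order action of `L` is stationary under every variation with fixed
lifted endpoints. -/
def IsSecondOrderExtremal (L : E × E × E → ℝ) (σ : ℝ → E) (a b : ℝ) : Prop :=
  ∀ γ : ℝ × ℝ → E, IsLiftedVariation γ σ a b →
    HasDerivAt (fun s => secondOrderAction L a b fun t => γ (s, t)) 0 0

theorem isOpen_secondLift_preimage (hU : IsOpen U) (hσ : ContDiff ℝ 2 σ) :
    IsOpen (secondLift σ ⁻¹' U) :=
  hU.preimage (contDiff_secondLift (n := 0) (hσ.of_le (by norm_num))).continuous

theorem contDiffOn_partialAlong (hU : IsOpen U) (hL : ContDiffOn ℝ 3 L U) (hσ : ContDiff ℝ 4 σ)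
    (ι : E →L[ℝ] E × E × E) : ContDiffOn ℝ 2 (partialAlong L σ ι) (secondLift σ ⁻¹' U) :=
  ((hL.fderiv_of_isOpen (m := 2) hU (by norm_num)).comp
    (contDiff_secondLift (n := 2) (hσ.of_le (by norm_num))).contDiffOn
    (mapsTo_preimage _ _)).clm_comp contDiffOn_const

theorem contDiffOn_deriv_partialAlong (hU : IsOpen U) (hL : ContDiffOn ℝ 3 L U)
    (hσ : ContDiff ℝ 4 σ) (ι : E →L[ℝ] E × E × E) :
    ContDiffOn ℝ 1 (deriv (partialAlong L σ ι)) (secondLift σ ⁻¹' U) :=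
  (contDiffOn_partialAlong hU hL hσ ι).deriv_of_isOpen
    (isOpen_secondLift_preimage hU (hσ.of_le (by norm_num))) (by norm_num)

theorem hasDerivAt_partialAlong (hU : IsOpen U) (hL : ContDiffOn ℝ 3 L U) (hσ : ContDiff ℝ 4 σ)
    (ι : E →L[ℝ] E × E × E) {t : ℝ} (ht : secondLift σ t ∈ U) :
    HasDerivAt (partialAlong L σ ι) (deriv (partialAlong L σ ι) t) t :=
  ((contDiffOn_partialAlong hU hL hσ ι).contDiffAt
    ((isOpen_secondLift_preimage hU (hσ.of_le (by norm_num))).mem_nhds ht)).differentiableAt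
    two_ne_zero |>.hasDerivAt

theorem hasDerivAt_deriv_partialAlong (hU : IsOpen U) (hL : ContDiffOn ℝ 3 L U)
    (hσ : ContDiff ℝ 4 σ) (ι : E →L[ℝ] E × E × E) {t : ℝ} (ht : secondLift σ t ∈ U) :
    HasDerivAt (deriv (partialAlong L σ ι)) (deriv (deriv (partialAlong L σ ι)) t) t :=
  ((contDiffOn_deriv_partialAlong hU hL hσ ι).contDiffAt
    ((isOpen_secondLift_preimage hU (hσ.of_le (by norm_num))).mem_nhds ht)).differentiableAt
    one_ne_zero |>.hasDerivAt

theorem continuousOn_deriv_deriv_partialAlong (hU : IsOpen U) (hL : ContDiffOn ℝ 3 L U)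
    (hσ : ContDiff ℝ 4 σ) (ι : E →L[ℝ] E × E × E) :
    ContinuousOn (deriv (deriv (partialAlong L σ ι))) (secondLift σ ⁻¹' U) :=
  (contDiffOn_deriv_partialAlong hU hL hσ ι).continuousOn_deriv_of_isOpen
    (isOpen_secondLift_preimage hU (hσ.of_le (by norm_num))) le_rfl

theorem continuousOn_lagrangianCovector (hU : IsOpen U) (hL : ContDiffOn ℝ 3 L U)
    (hσ : ContDiff ℝ 4 σ) : ContinuousOn (lagrangianCovector L σ) (secondLift σ ⁻¹' U) :=
  ((contDiffOn_partialAlong hU hL hσ _).continuousOn.sub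
    (contDiffOn_deriv_partialAlong hU hL hσ _).continuousOn).add
    (continuousOn_deriv_deriv_partialAlong hU hL hσ _)

theorem fderiv_secondLift_apply (t : ℝ) :
    fderiv ℝ L (secondLift σ t) (secondLift η t) =
      partialAlong L σ (inPosition E) t (η t) + partialAlong L σ (inVelocity E) t (deriv η t)
        + partialAlong L σ (inAcceleration E) t (deriv (deriv η) t) := by
  simp [partialAlong, secondLift, ← map_add]

theorem integral_fderiv_secondLift_eq_integral_lagrangianCovector (hU : IsOpen U)
    (hL : ContDiffOn ℝ 3 L U) (hσ : ContDiff ℝ 4 σ) (hmem : ∀ t ∈ uIcc a b, secondLift σ t ∈ U)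
    (hη : ContDiff ℝ 2 η) (ha : η a = 0) (hb : η b = 0) (ha' : deriv η a = 0)
    (hb' : deriv η b = 0) :
    ∫ t in a..b, fderiv ℝ L (secondLift σ t) (secondLift η t) =
      ∫ t in a..b, lagrangianCovector L σ t (η t) := by
  have hη' : ContDiff ℝ 1 (deriv η) := (hη.of_le (by norm_num)).deriv'
  simp only [fderiv_secondLift_apply]
  exact integral_clm_apply_add_deriv_add_deriv_deriv_eq
    ((contDiffOn_partialAlong hU hL hσ _).continuousOn.mono hmem)
    (fun t ht => hasDerivAt_partialAlong hU hL hσ _ (hmem t ht))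
    (fun t ht => hasDerivAt_partialAlong hU hL hσ _ (hmem t ht))
    (fun t ht => hasDerivAt_deriv_partialAlong hU hL hσ _ (hmem t ht))
    ((contDiffOn_deriv_partialAlong hU hL hσ _).continuousOn.mono hmem)
    ((continuousOn_deriv_deriv_partialAlong hU hL hσ _).mono hmem)
    (fun t _ => (hη.differentiable two_ne_zero t).hasDerivAt)
    (fun t _ => (hη'.differentiable one_ne_zero t).hasDerivAt)
    hη'.continuous_deriv_one.continuousOn ha hb ha' hb'

theorem hasDerivAt_secondOrderAction {s₀ : ℝ} (hU : IsOpen U) (hL : ContDiffOn ℝ 1 L U)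
    (hγ : ContDiff ℝ 3 γ) (hmem : ∀ t ∈ uIcc a b, familyLift γ (s₀, t) ∈ U) :
    HasDerivAt (fun s => secondOrderAction L a b fun t => γ (s, t))
      (∫ t in a..b, fderiv ℝ L (familyLift γ (s₀, t)) (familyLift (derivFst γ) (s₀, t))) s₀ := by
  have hlift : Continuous (familyLift γ) :=
    (contDiff_familyLift (n := 1) (hγ.of_le (by norm_num))).continuous
  have hlift' : Continuous (familyLift (derivFst γ)) :=
    (contDiff_familyLift (n := 0) (contDiff_derivFst hγ (by norm_num))).continuous
  refine hasDerivAt_integral_of_continuousOn_of_isOpen (f := L ∘ familyLift γ)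
    (f' := fun p => fderiv ℝ L (familyLift γ p) (familyLift (derivFst γ) p))
    (hU.preimage hlift) hmem (hL.continuousOn.comp hlift.continuousOn (mapsTo_preimage _ _))
    (((hL.continuousOn_fderiv_of_isOpen hU le_rfl).comp hlift.continuousOn
      (mapsTo_preimage _ _)).clm_apply hlift'.continuousOn) fun p hp => ?_
  have hLp : DifferentiableAt ℝ L (familyLift γ p) :=
    (hL.contDiffAt (hU.mem_nhds hp)).differentiableAt one_ne_zero
  exact HasFDerivAt.comp_hasDerivAt p.1 hLp.hasFDerivAt (hasDerivAt_familyLift hγ p.1 p.2)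

namespace IsLiftedVariation

theorem familyLift_zero_eq (hγ : IsLiftedVariation γ σ a b) (hab : a < b) (hσ : ContDiff ℝ 2 σ)
    {t : ℝ} (ht : t ∈ Icc a b) : familyLift γ (0, t) = secondLift σ t :=
  eqOn_secondLift (uniqueDiffOn_Icc hab)
    ((hγ.contDiff.of_le ENat.LEInfty.out).comp (by fun_prop)) hσ hγ.zero_eq ht

theorem hasDerivAt_secondOrderAction_zero (hγ : IsLiftedVariation γ σ a b) (hab : a < b)
    (hU : IsOpen U) (hL : ContDiffOn ℝ 3 L U) (hσ : ContDiff ℝ 4 σ)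
    (hmem : ∀ t ∈ Icc a b, secondLift σ t ∈ U) :
    HasDerivAt (fun s => secondOrderAction L a b fun t => γ (s, t))
      (∫ t in a..b, lagrangianCovector L σ t (derivFst γ (0, t))) 0 := by
  have hγ3 : ContDiff ℝ 3 γ := hγ.contDiff.of_le ENat.LEInfty.out
  have hγ2 : ContDiff ℝ 2 γ := hγ3.of_le (by norm_num)
  rw [← uIcc_of_le hab.le] at hmem
  have hlift : ∀ t ∈ uIcc a b, familyLift γ (0, t) = secondLift σ t := by
    rw [uIcc_of_le hab.le]
    exact fun t => hγ.familyLift_zero_eq hab (hσ.of_le (by norm_num))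
  refine (hasDerivAt_secondOrderAction hU (hL.of_le (by norm_num)) hγ3
    fun t ht => hlift t ht ▸ hmem t ht).congr_deriv ?_
  rw [← integral_fderiv_secondLift_eq_integral_lagrangianCovector (η := fun t => derivFst γ (0, t))
    hU hL hσ hmem
    ((contDiff_derivFst hγ3 (by norm_num)).comp (by fun_prop))
    (derivFst_eq_zero_of_forall_eq hγ.left_eq 0) (derivFst_eq_zero_of_forall_eq hγ.right_eq 0)
    (deriv_derivFst_eq_zero_of_forall_eq hγ2 hγ.deriv_left_eq 0)
    (deriv_derivFst_eq_zero_of_forall_eq hγ2 hγ.deriv_right_eq 0)]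
  exact intervalIntegral.integral_congr fun t ht => by simp only [hlift t ht]; rfl

theorem of_tsupport_subset_Ioo (hσ : ContDiff ℝ ∞ σ) (hη : ContDiff ℝ ∞ η)
    (hsupp : tsupport η ⊆ Ioo a b) : IsLiftedVariation (fun p => σ p.2 + p.1 • η p.2) σ a b := by
  have hηz {t : ℝ} (ht : t ∉ Ioo a b) : η t = 0 :=
    image_eq_zero_of_notMem_tsupport fun h => ht (hsupp h)
  have hηz' {t : ℝ} (ht : t ∉ Ioo a b) : deriv η t = 0 :=
    image_eq_zero_of_notMem_tsupport fun h => ht (hsupp (tsupport_deriv_subset h))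
  have hderiv (s t : ℝ) : deriv (fun t => σ t + s • η t) t = deriv σ t + s • deriv η t :=
    ((hσ.differentiable (by simp) t).hasDerivAt.add
      ((hη.differentiable (by simp) t).hasDerivAt.const_smul s)).deriv
  exact
    { contDiff := by fun_prop
      zero_eq := by simp
      left_eq := by simp [hηz]
      right_eq := by simp [hηz]
      deriv_left_eq := by simp [hderiv, hηz']
      deriv_right_eq := by simp [hderiv, hηz'] }

end IsLiftedVariation

theorem isSecondOrderExtremal_iff_lagrangianCovector_eq_zero (hU : IsOpen U)
    (hL : ContDiffOn ℝ 3 L U) (hσ : ContDiff ℝ ∞ σ) (hab : a < b)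
    (hmem : ∀ t ∈ Icc a b, secondLift σ t ∈ U) :
    IsSecondOrderExtremal L σ a b ↔ ∀ t ∈ Icc a b, lagrangianCovector L σ t = 0 := by
  have hσ4 : ContDiff ℝ 4 σ := hσ.of_le ENat.LEInfty.out
  constructor
  · intro hext t ht
    ext h
    refine eqOn_zero_of_forall_integral_contDiff_smul_eq_zero hab
      (((continuousOn_lagrangianCovector hU hL hσ4).mono hmem).clm_apply
        (continuousOn_const (c := h))) (fun φ hφ hsupp => ?_) ht
    have hvar := IsLiftedVariation.of_tsupport_subset_Ioo (η := fun t => φ t • h) hσ (by fun_prop)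
      ((tsupport_smul_subset_left φ fun _ => h).trans hsupp)
    have hfield (t : ℝ) : derivFst (fun p => σ p.2 + p.1 • φ p.2 • h) (0, t) = φ t • h := by
      simpa [derivFst] using
        (((hasDerivAt_id (0 : ℝ)).smul_const (φ t • h)).const_add (σ t)).deriv
    have hzero := (hvar.hasDerivAt_secondOrderAction_zero hab hU hL hσ4 hmem).unique (hext _ hvar)
    simpa only [hfield, map_smul] using hzero
  · intro hzero γ hγ
    refine (hγ.hasDerivAt_secondOrderAction_zero hab hU hL hσ4 hmem).congr_deriv ?_
    rw [← uIcc_of_le hab.le] at hzero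
    rw [intervalIntegral.integral_congr (g := fun _ => 0) fun t ht => by simp [hzero t ht],
      intervalIntegral.integral_zero]

end FirstVariation

section Kawaguchi

open Set Topology
open scoped ContDiff

variable {E F : Type*} [NormedAddCommGroup E] [NormedSpace ℝ E] [NormedAddCommGroup F]
  [NormedSpace ℝ F] {f : E × E × E → F} {K : E × E × E → ℝ} {U : Set (E × E × E)} {σ : ℝ → E}
  {x y z : E}

/-- The covector `E₂(t)` of `eulerLagrange₂`, over an arbitrary real normed space. -/
noncomputable def kawaguchiCovector (K : E × E × E → ℝ) (σ : ℝ → E) (t : ℝ) (h : E) : ℝ :=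
  (fderiv ℝ (fun x => fderiv ℝ (fun y => K (x, y, deriv (deriv σ) t)) (deriv σ t)) (σ t)) h
      (deriv σ t)
    + 2 * ((fderiv ℝ (fun x => fderiv ℝ (fun z => K (x, deriv σ t, z)) (deriv (deriv σ) t))
        (σ t)) h (deriv (deriv σ) t))
    - deriv (fun s => fderiv ℝ (fun y => K (σ s, y, deriv (deriv σ) s)) (deriv σ s) h) t
    + deriv (deriv (fun s => fderiv ℝ (fun z => K (σ s, deriv σ s, z)) (deriv (deriv σ) s) h)) t

theorem hasFDerivAt_position (hf : DifferentiableAt ℝ f (x, y, z)) :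
    HasFDerivAt (fun x => f (x, y, z)) ((fderiv ℝ f (x, y, z)).comp (inPosition E)) x :=
  hf.hasFDerivAt.comp x (hasFDerivAt_prodMk_left x (y, z))

theorem fderiv_velocity (hf : DifferentiableAt ℝ f (x, y, z)) :
    fderiv ℝ (fun y => f (x, y, z)) y = (fderiv ℝ f (x, y, z)).comp (inVelocity E) :=
  (hf.hasFDerivAt.comp y
    ((hasFDerivAt_prodMk_right x (y, z)).comp y (hasFDerivAt_prodMk_left y z))).fderiv

theorem fderiv_acceleration (hf : DifferentiableAt ℝ f (x, y, z)) :
    fderiv ℝ (fun z => f (x, y, z)) z = (fderiv ℝ f (x, y, z)).comp (inAcceleration E) :=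
  (hf.hasFDerivAt.comp z
    ((hasFDerivAt_prodMk_right x (y, z)).comp z (hasFDerivAt_prodMk_right y z))).fderiv

theorem fderiv_apply_of_homogeneous (hK : DifferentiableAt ℝ K (x, y, z))
    (hhom : ∀ᶠ l : ℝ in 𝓝 1, K (x, l • y, l ^ 2 • z) = l * K (x, y, z)) :
    fderiv ℝ K (x, y, z) (0, y, (2 : ℝ) • z) = K (x, y, z) := by
  have hcurve : HasDerivAt (fun l : ℝ => (x, l • y, l ^ 2 • z)) (0, y, (2 : ℝ) • z) 1 := by
    refine (hasDerivAt_const _ _).prodMk (HasDerivAt.prodMk ?_ ?_)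
    · simpa using (hasDerivAt_id (1 : ℝ)).smul_const y
    · simpa using (hasDerivAt_pow 2 (1 : ℝ)).smul_const z
  have hchain : HasDerivAt (fun l : ℝ => K (x, l • y, l ^ 2 • z))
      (fderiv ℝ K (x, y, z) (0, y, (2 : ℝ) • z)) 1 :=
    HasFDerivAt.comp_hasDerivAt (1 : ℝ) (by simpa using hK.hasFDerivAt) hcurve
  have hlinear : HasDerivAt (fun l : ℝ => K (x, l • y, l ^ 2 • z)) (K (x, y, z)) 1 := by
    simpa using ((hasDerivAt_id (1 : ℝ)).mul_const (K (x, y, z))).congr_of_eventuallyEq hhom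
  exact hchain.unique hlinear

theorem fderiv_fderiv_apply_of_homogeneous (hU : IsOpen U) (hK : ContDiffOn ℝ 2 K U)
    (hhom : ∀ x y z, (x, y, z) ∈ U → ∀ l : ℝ, 0 < l → K (x, l • y, l ^ 2 • z) = l * K (x, y, z))
    (hp : (x, y, z) ∈ U) (h : E) :
    fderiv ℝ (fderiv ℝ K) (x, y, z) (inPosition E h) (0, y, (2 : ℝ) • z) =
      fderiv ℝ K (x, y, z) (inPosition E h) := by
  have hK' {q : E × E × E} (hq : q ∈ U) : DifferentiableAt ℝ K q :=
    (hK.contDiffAt (hU.mem_nhds hq)).differentiableAt two_ne_zero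
  have hK'' : DifferentiableAt ℝ (fderiv ℝ K) (x, y, z) :=
    ((hK.fderiv_of_isOpen (m := 1) hU (by norm_num)).contDiffAt
      (hU.mem_nhds hp)).differentiableAt one_ne_zero
  have hnear : ∀ᶠ x' in 𝓝 x, (x', y, z) ∈ U :=
    (Continuous.prodMk_left (y, z)).continuousAt.eventually (hU.mem_nhds hp)
  have heuler : (fun x' => fderiv ℝ K (x', y, z) (0, y, (2 : ℝ) • z)) =ᶠ[𝓝 x]
      fun x' => K (x', y, z) :=
    hnear.mono fun x' hx' => fderiv_apply_of_homogeneous (hK' hx')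
      ((lt_mem_nhds one_pos).mono fun l hl => hhom x' y z hx' l hl)
  have hleft := (hasFDerivAt_position hK'').clm_apply
    (hasFDerivAt_const ((0, y, (2 : ℝ) • z) : E × E × E) x)
  have hright := (hasFDerivAt_position (hK' hp)).congr_of_eventuallyEq heuler
  simpa using DFunLike.congr_fun (hleft.unique hright) h

theorem fderiv_position_fderiv_comp (hf : DifferentiableAt ℝ (fderiv ℝ f) (x, y, z))
    (ι : E →L[ℝ] E × E × E) (h k : E) :
    fderiv ℝ (fun x => (fderiv ℝ f (x, y, z)).comp ι) x h k =
      fderiv ℝ (fderiv ℝ f) (x, y, z) (inPosition E h) (ι k) := by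
  rw [((hasFDerivAt_position hf).clm_comp (hasFDerivAt_const ι x)).fderiv]
  simp

theorem fderiv_position_fderiv_add_of_homogeneous (hU : IsOpen U) (hK : ContDiffOn ℝ 2 K U)
    (hhom : ∀ x y z, (x, y, z) ∈ U → ∀ l : ℝ, 0 < l → K (x, l • y, l ^ 2 • z) = l * K (x, y, z))
    (hp : (x, y, z) ∈ U) (h : E) :
    fderiv ℝ (fun x => fderiv ℝ (fun y => K (x, y, z)) y) x h y
      + 2 * fderiv ℝ (fun x => fderiv ℝ (fun z => K (x, y, z)) z) x h z
      = fderiv ℝ K (x, y, z) (inPosition E h) := by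
  have hK' {q : E × E × E} (hq : q ∈ U) : DifferentiableAt ℝ K q :=
    (hK.contDiffAt (hU.mem_nhds hq)).differentiableAt two_ne_zero
  have hK'' : DifferentiableAt ℝ (fderiv ℝ K) (x, y, z) :=
    ((hK.fderiv_of_isOpen (m := 1) hU (by norm_num)).contDiffAt
      (hU.mem_nhds hp)).differentiableAt one_ne_zero
  have hnear : ∀ᶠ x' in 𝓝 x, (x', y, z) ∈ U :=
    (Continuous.prodMk_left (y, z)).continuousAt.eventually (hU.mem_nhds hp)
  have hvelocity : (fun x => fderiv ℝ (fun y => K (x, y, z)) y) =ᶠ[𝓝 x]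
      fun x => (fderiv ℝ K (x, y, z)).comp (inVelocity E) :=
    hnear.mono fun x' hx' => fderiv_velocity (hK' hx')
  have hacceleration : (fun x => fderiv ℝ (fun z => K (x, y, z)) z) =ᶠ[𝓝 x]
      fun x => (fderiv ℝ K (x, y, z)).comp (inAcceleration E) :=
    hnear.mono fun x' hx' => fderiv_acceleration (hK' hx')
  have hsplit : ((0, y, (2 : ℝ) • z) : E × E × E) =
      inVelocity E y + (2 : ℝ) • inAcceleration E z := by
    simp
  rw [hvelocity.fderiv_eq, hacceleration.fderiv_eq, fderiv_position_fderiv_comp hK'',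
    fderiv_position_fderiv_comp hK'', ← fderiv_fderiv_apply_of_homogeneous hU hK hhom hp, hsplit,
    map_add, map_smul, smul_eq_mul]

theorem kawaguchiCovector_eq_lagrangianCovector (hU : IsOpen U) (hK : ContDiffOn ℝ 3 K U)
    (hhom : ∀ x y z, (x, y, z) ∈ U → ∀ l : ℝ, 0 < l → K (x, l • y, l ^ 2 • z) = l * K (x, y, z))
    (hσ : ContDiff ℝ 4 σ) {t : ℝ} (ht : secondLift σ t ∈ U) (h : E) :
    kawaguchiCovector K σ t h = lagrangianCovector K σ t h := by
  have hV : IsOpen (secondLift σ ⁻¹' U) := isOpen_secondLift_preimage hU (hσ.of_le (by norm_num))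
  have hK' {s : ℝ} (hs : secondLift σ s ∈ U) : DifferentiableAt ℝ K (secondLift σ s) :=
    (hK.contDiffAt (hU.mem_nhds hs)).differentiableAt three_ne_zero
  have happly {P : ℝ → E →L[ℝ] ℝ} {s : ℝ} (hP : HasDerivAt P (deriv P s) s) :
      deriv (fun s => P s h) s = deriv P s h := by
    simpa using (hP.clm_apply (hasDerivAt_const s h)).deriv
  have hvelocity : EqOn (fun s => fderiv ℝ (fun y => K (σ s, y, deriv (deriv σ) s)) (deriv σ s) h)
      (fun s => partialAlong K σ (inVelocity E) s h) (secondLift σ ⁻¹' U) :=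
    fun s hs => DFunLike.congr_fun (fderiv_velocity (hK' hs)) h
  have hacceleration : EqOn
      (fun s => fderiv ℝ (fun z => K (σ s, deriv σ s, z)) (deriv (deriv σ) s) h)
      (fun s => partialAlong K σ (inAcceleration E) s h) (secondLift σ ⁻¹' U) :=
    fun s hs => DFunLike.congr_fun (fderiv_acceleration (hK' hs)) h
  have hacceleration' : EqOn
      (deriv fun s => fderiv ℝ (fun z => K (σ s, deriv σ s, z)) (deriv (deriv σ) s) h)
      (fun s => deriv (partialAlong K σ (inAcceleration E)) s h) (secondLift σ ⁻¹' U) :=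
    fun s hs => (hacceleration.deriv hV hs).trans
      (happly (hasDerivAt_partialAlong hU hK hσ _ hs))
  rw [kawaguchiCovector,
    fderiv_position_fderiv_add_of_homogeneous hU (hK.of_le (by norm_num)) hhom ht,
    hvelocity.deriv hV ht, happly (hasDerivAt_partialAlong hU hK hσ _ ht),
    hacceleration'.deriv hV ht, happly (hasDerivAt_deriv_partialAlong hU hK hσ _ ht)]
  rfl

theorem finsler_kawaguchi_extremal_iff_eulerLagrange_general (hU : IsOpen U)
    (hK : ContDiffOn ℝ 3 K U)
    (hhom : ∀ x y z, (x, y, z) ∈ U → ∀ l : ℝ, 0 < l → K (x, l • y, l ^ 2 • z) = l * K (x, y, z))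
    {t₁ t₂ : ℝ} (ht : t₁ < t₂) (hσ : ContDiff ℝ ∞ σ)
    (hmem : ∀ t ∈ Icc t₁ t₂, secondLift σ t ∈ U) :
    IsSecondOrderExtremal K σ t₁ t₂ ↔ ∀ t ∈ Icc t₁ t₂, ∀ h, kawaguchiCovector K σ t h = 0 := by
  rw [isSecondOrderExtremal_iff_lagrangianCovector_eq_zero hU hK hσ ht hmem]
  refine forall₂_congr fun t htI => ?_
  simp only [kawaguchiCovector_eq_lagrangianCovector hU hK hhom
    (hσ.of_le ENat.LEInfty.out) (hmem t htI), ContinuousLinearMap.ext_iff, zero_apply]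

end Kawaguchi

/-- **Extremals of the second-order Finsler–Kawaguchi action are characterised by the
second-order Euler–Lagrange equations.** -/
theorem finsler_kawaguchi_extremal_iff_eulerLagrange
    (n : ℕ)
    (K : EuclideanSpace ℝ (Fin n) × EuclideanSpace ℝ (Fin n) × EuclideanSpace ℝ (Fin n) → ℝ)
    (hhom : ∀ (x y z : EuclideanSpace ℝ (Fin n)) (l ρ : ℝ), 0 < l →
      K (x, l • y, (l ^ 2) • z + ρ • y) = l * K (x, y, z))
    (hKcont : Continuous K)
    (hKsmooth : ContDiffOn ℝ (⊤ : ℕ∞) K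
      {p : EuclideanSpace ℝ (Fin n) × EuclideanSpace ℝ (Fin n) × EuclideanSpace ℝ (Fin n) |
        p.2.1 ≠ 0})
    (t₁ t₂ : ℝ) (ht : t₁ < t₂)
    (σ : ℝ → EuclideanSpace ℝ (Fin n)) (hσ : ContDiff ℝ (⊤ : ℕ∞) σ)
    (hreg : ∀ t ∈ Set.Icc t₁ t₂, deriv σ t ≠ 0) :
    (∀ γ : ℝ × ℝ → EuclideanSpace ℝ (Fin n), ContDiff ℝ (⊤ : ℕ∞) γ →
        (∀ t ∈ Set.Icc t₁ t₂, γ (0, t) = σ t) →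
        (∀ s : ℝ, γ (s, t₁) = σ t₁) → (∀ s : ℝ, γ (s, t₂) = σ t₂) →
        (∀ s : ℝ, deriv (fun τ => γ (s, τ)) t₁ = deriv σ t₁) →
        (∀ s : ℝ, deriv (fun τ => γ (s, τ)) t₂ = deriv σ t₂) →
        HasDerivAt (fun s => ∫ t in t₁..t₂,
          K (γ (s, t), deriv (fun τ => γ (s, τ)) t, deriv (deriv (fun τ => γ (s, τ))) t)) 0 0)
      ↔ (∀ t ∈ Set.Icc t₁ t₂, ∀ h : EuclideanSpace ℝ (Fin n), eulerLagrange₂ n K σ t h = 0) := by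
  refine Iff.trans
    ⟨fun h γ hγ => h γ hγ.contDiff hγ.zero_eq hγ.left_eq hγ.right_eq hγ.deriv_left_eq
      hγ.deriv_right_eq,
    fun h γ hγ h₀ h₁ h₂ h₁' h₂' => h γ ⟨hγ, h₀, h₁, h₂, h₁', h₂'⟩⟩
    (finsler_kawaguchi_extremal_iff_eulerLagrange_general
      (isOpen_ne_fun (by fun_prop) continuous_const) (hKsmooth.of_le ENat.LEInfty.out)
      (fun x y z _ l hl => by simpa using hhom x y z l 0 hl) ht hσ hreg)
end

section
/- (Noether's theorem, first order.) Let F : ℝⁿ × ℝⁿ → ℝ be a Finsler function that is continuous on ℝⁿ × ℝⁿ and C^∞ on ℝⁿ × (ℝⁿ ∖ {0}). Let u : ℝⁿ → ℝⁿ be C¹ and suppose the Lie derivative of the Hilbert form along the tangent lift of u vanishes, i.e. for every (x, v) with v ≠ 0 the covector identity D_x(D_yF)(x, v)(u(x)) + D_y(D_yF)(x, v)(Du(x)(v)) + D_yF(x, v) ∘ Du(x) = 0 holds on ℝⁿ, where Du(x) is the Fréchet derivative of u at x. Then for every C^∞ curve σ with σ′ ≠ 0 on [t₁, t₂] that satisfies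 the Euler–Lagrange equations of F on [t₁, t₂], the Noether current t ↦ D_yF(σ(t), σ′(t))(u(σ(t))) is constant on [t₁, t₂]. -/
/-- The Euler–Lagrange covector of a Finsler function `F` along a curve `σ`. -/
noncomputable def eulerLagrange (n : ℕ)
    (F : EuclideanSpace ℝ (Fin n) × EuclideanSpace ℝ (Fin n) → ℝ)
    (σ : ℝ → EuclideanSpace ℝ (Fin n)) (t : ℝ) (h : EuclideanSpace ℝ (Fin n)) : ℝ :=
  (fderiv ℝ (fun x => fderiv ℝ (fun y => F (x, y)) (deriv σ t)) (σ t)) h (deriv σ t)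
    - deriv (fun s => fderiv ℝ (fun y => F (σ s, y)) (deriv σ s) h) t

/-!
Write `p t = D_yF (σ t, σ′ t)` for the momentum along `σ`. The Noether current `p t (u (σ t))` has
derivative `p′ (u) + p (Du σ′)`. The Euler–Lagrange covector trades `p′ (u)` for `D_x(D_yF)(u)(σ′)`,
and what results is the Lie derivative of the Hilbert form evaluated on `σ′`, up to the Hessian term
`D_y(D_yF)(Du σ′)(σ′)`, which homogeneity of `F` kills.
-/

open Set
open scoped Topology

section Homogeneous

variable {E G : Type*} [NormedAddCommGroup E] [NormedSpace ℝ E]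
  [NormedAddCommGroup G] [NormedSpace ℝ G] {f : E → G} {v : E}

theorem fderiv_apply_self_of_posHomogeneous (hf : DifferentiableAt ℝ f v)
    (hhom : ∀ l : ℝ, 0 < l → f (l • v) = l • f v) : fderiv ℝ f v v = f v := by
  have hray : HasDerivAt (fun l : ℝ => l • v) v 1 := by
    simpa only [one_smul] using (hasDerivAt_id' (1 : ℝ)).smul_const v
  have hlin : HasDerivAt (fun l : ℝ => l • f v) (f v) 1 := by
    simpa only [one_smul] using (hasDerivAt_id' (1 : ℝ)).smul_const (f v)
  have hcomp : HasDerivAt (fun l : ℝ => f (l • v)) (fderiv ℝ f v v) 1 :=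
    hf.hasFDerivAt.comp_hasDerivAt_of_eq 1 hray (one_smul ℝ v).symm
  refine hcomp.unique (hlin.congr_of_eventuallyEq ?_)
  filter_upwards [lt_mem_nhds one_pos] with l hl using hhom l hl

theorem fderiv_fderiv_apply_self_of_posHomogeneous (hf : ContDiffAt ℝ 2 f v)
    (hhom : ∀ (y : E) (l : ℝ), 0 < l → f (l • y) = l • f y) (w : E) :
    fderiv ℝ (fderiv ℝ f) v w v = 0 := by
  have heuler : (fun y => fderiv ℝ f y y) =ᶠ[𝓝 v] f := by
    filter_upwards [hf.eventually (by simp)] with y hy using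
      fderiv_apply_self_of_posHomogeneous (hy.differentiableAt two_ne_zero) (hhom y)
  have hdf : DifferentiableAt ℝ (fderiv ℝ f) v :=
    (hf.fderiv_right one_add_one_eq_two.le).differentiableAt one_ne_zero
  have hprod := (hdf.hasFDerivAt.clm_apply (hasFDerivAt_id v)).unique
    ((hf.differentiableAt two_ne_zero).hasFDerivAt.congr_of_eventuallyEq heuler)
  simpa using congrArg (· w) hprod

end Homogeneous

section Noether

variable {E : Type*} [NormedAddCommGroup E] [NormedSpace ℝ E]

/-- The fibre derivative `D_yF` at `p = (x, y)`, i.e. the coefficient covector of the Hilbert form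
`(∂F/∂yᵘ) dxᵘ`. -/
noncomputable def fiberDeriv (F : E × E → ℝ) (p : E × E) : E →L[ℝ] ℝ :=
  fderiv ℝ (fun y => F (p.1, y)) p.2

/-- The Lie derivative of the Hilbert form of `F` along the complete lift of `u`, as a covector
at `(x, v)`. The lift is the vector field `(u x, Du(x) v)`. There is no `dy` part, since the
Hilbert form has none and `u` depends on `x` alone. -/
noncomputable def lieDerivHilbertForm (F : E × E → ℝ) (u : E → E) (x v : E) : E →L[ℝ] ℝ :=
  fderiv ℝ (fun x' => fiberDeriv F (x', v)) x (u x)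
    + fderiv ℝ (fun v' => fiberDeriv F (x, v')) v (fderiv ℝ u x v)
    + (fiberDeriv F (x, v)).comp (fderiv ℝ u x)

/-- The Euler–Lagrange covector of `F` along `σ` on an arbitrary normed space, in the form for
homogeneous `F`: the usual `D_xF(h)` is written `D_x(D_yF)(h)(σ′)`, as Euler's identity permits. -/
noncomputable def eulerLagrangeCovector (F : E × E → ℝ) (σ : ℝ → E) (t : ℝ) (h : E) : ℝ :=
  fderiv ℝ (fun x => fiberDeriv F (x, deriv σ t)) (σ t) h (deriv σ t)
    - deriv (fun s => fiberDeriv F (σ s, deriv σ s) h) t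

/-- The Noether current of the vector field `u` along `σ`: the Hilbert form contracted with `u`. -/
noncomputable def noetherCurrent (F : E × E → ℝ) (u : E → E) (σ : ℝ → E) (t : ℝ) : ℝ :=
  fiberDeriv F (σ t, deriv σ t) (u (σ t))

variable {F : E × E → ℝ} {u : E → E} {σ : ℝ → E} {t : ℝ}

theorem differentiableAt_fiberDeriv {p : E × E} (hF : ContDiffAt ℝ 2 F p) :
    DifferentiableAt ℝ (fiberDeriv F) p := by
  have hF' : ContDiffAt ℝ 2 (Function.uncurry fun (q : E × E) y => F (q.1, y)) (p, p.2) :=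
    ContDiffAt.comp (p, p.2) (g := F) (f := fun q : (E × E) × E => (q.1.1, q.2)) hF (by fun_prop)
  exact (hF'.fderiv contDiffAt_snd one_add_one_eq_two.le).differentiableAt one_ne_zero

theorem fderiv_fiberDeriv_apply_self {x v : E} (hF : ContDiffAt ℝ 2 F (x, v))
    (hhom : ∀ (y : E) (l : ℝ), 0 < l → F (x, l • y) = l * F (x, y)) (w : E) :
    fderiv ℝ (fun v' => fiberDeriv F (x, v')) v w v = 0 :=
  fderiv_fderiv_apply_self_of_posHomogeneous (hF.comp v (by fun_prop)) hhom w

theorem hasDerivAt_noetherCurrent (hF : ContDiffAt ℝ 2 F (σ t, deriv σ t))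
    (hhom : ∀ (y : E) (l : ℝ), 0 < l → F (σ t, l • y) = l * F (σ t, y))
    (hu : DifferentiableAt ℝ u (σ t)) (hσ : DifferentiableAt ℝ σ t)
    (hσ' : DifferentiableAt ℝ (deriv σ) t) :
    HasDerivAt (noetherCurrent F u σ)
      (lieDerivHilbertForm F u (σ t) (deriv σ t) (deriv σ t)
        - eulerLagrangeCovector F σ t (u (σ t))) t := by
  have hmomentum : DifferentiableAt ℝ (fun s => fiberDeriv F (σ s, deriv σ s)) t :=
    (differentiableAt_fiberDeriv hF).fun_comp' t (hσ.prodMk hσ')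
  have hfield : HasDerivAt (fun s => u (σ s)) (fderiv ℝ u (σ t) (deriv σ t)) t :=
    hu.hasFDerivAt.comp_hasDerivAt t hσ.hasDerivAt
  have hfrozen : deriv (fun s => fiberDeriv F (σ s, deriv σ s) (u (σ t))) t
      = deriv (fun s => fiberDeriv F (σ s, deriv σ s)) t (u (σ t)) := by
    simpa using (hmomentum.hasDerivAt.clm_apply (hasDerivAt_const t (u (σ t)))).deriv
  have hhessian := fderiv_fiberDeriv_apply_self hF hhom (fderiv ℝ u (σ t) (deriv σ t))
  refine (hmomentum.hasDerivAt.clm_apply hfield).congr_deriv ?_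
  simp only [lieDerivHilbertForm, eulerLagrangeCovector, add_apply,
    ContinuousLinearMap.comp_apply, hhessian, hfrozen]
  ring

theorem noether_first_order_general
    (hhom : ∀ (x y : E) (l : ℝ), 0 < l → F (x, l • y) = l * F (x, y))
    (hF : ContDiffOn ℝ 2 F {p : E × E | p.2 ≠ 0}) (hu : Differentiable ℝ u)
    (hinv : ∀ x v : E, v ≠ 0 → lieDerivHilbertForm F u x v v = 0) {t₁ t₂ : ℝ}
    (hσ' : ∀ t ∈ Icc t₁ t₂, DifferentiableAt ℝ (deriv σ) t)
    (hreg : ∀ t ∈ Icc t₁ t₂, deriv σ t ≠ 0)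
    (hEL : ∀ t ∈ Icc t₁ t₂, ∀ h : E, eulerLagrangeCovector F σ t h = 0) :
    ∀ t ∈ Icc t₁ t₂, ∀ t' ∈ Icc t₁ t₂, noetherCurrent F u σ t = noetherCurrent F u σ t' := by
  have hopen : IsOpen {p : E × E | p.2 ≠ 0} := isOpen_ne.preimage continuous_snd
  have hderiv : ∀ t ∈ Icc t₁ t₂, HasDerivAt (noetherCurrent F u σ) 0 t := by
    intro t ht
    have hFt := hF.contDiffAt (hopen.mem_nhds (x := (σ t, deriv σ t)) (hreg t ht))
    simpa only [hinv _ _ (hreg t ht), hEL t ht, sub_zero] using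
      hasDerivAt_noetherCurrent hFt (hhom (σ t)) (hu (σ t))
        (differentiableAt_of_deriv_ne_zero (hreg t ht)) (hσ' t ht)
  have hconst := constant_of_has_deriv_right_zero
    (fun t ht => (hderiv t ht).continuousAt.continuousWithinAt)
    fun t ht => (hderiv t (Ico_subset_Icc_self ht)).hasDerivWithinAt
  exact fun t ht t' ht' => (hconst t ht).trans (hconst t' ht').symm

end Noether

/-- **Noether's theorem (first-order mechanics).**  If the Lie derivative of the Hilbert form
along the tangent lift of a vector field `u` vanishes, then along every extremal the Noether
current `t ↦ D_yF(σ t, σ′ t)(u (σ t))` is constant. -/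
theorem noether_first_order
    (n : ℕ) (F : EuclideanSpace ℝ (Fin n) × EuclideanSpace ℝ (Fin n) → ℝ)
    (hhom : ∀ (x y : EuclideanSpace ℝ (Fin n)) (l : ℝ), 0 < l → F (x, l • y) = l * F (x, y))
    (hFcont : Continuous F)
    (hFsmooth : ContDiffOn ℝ (⊤ : ℕ∞) F
      {p : EuclideanSpace ℝ (Fin n) × EuclideanSpace ℝ (Fin n) | p.2 ≠ 0})
    (u : EuclideanSpace ℝ (Fin n) → EuclideanSpace ℝ (Fin n)) (hu : ContDiff ℝ 1 u)
    (hinv : ∀ (x v : EuclideanSpace ℝ (Fin n)), v ≠ 0 →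
      ∀ h : EuclideanSpace ℝ (Fin n),
        (fderiv ℝ (fun x' => fderiv ℝ (fun y => F (x', y)) v) x) (u x) h
          + (fderiv ℝ (fun v' => fderiv ℝ (fun y => F (x, y)) v') v) (fderiv ℝ u x v) h
          + fderiv ℝ (fun y => F (x, y)) v (fderiv ℝ u x h) = 0)
    (t₁ t₂ : ℝ) (σ : ℝ → EuclideanSpace ℝ (Fin n)) (hσ : ContDiff ℝ (⊤ : ℕ∞) σ)
    (hreg : ∀ t ∈ Set.Icc t₁ t₂, deriv σ t ≠ 0)
    (hEL : ∀ t ∈ Set.Icc t₁ t₂, ∀ h : EuclideanSpace ℝ (Fin n), eulerLagrange n F σ t h = 0) :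
    ∀ t ∈ Set.Icc t₁ t₂, ∀ t' ∈ Set.Icc t₁ t₂,
      fderiv ℝ (fun y => F (σ t, y)) (deriv σ t) (u (σ t)) =
        fderiv ℝ (fun y => F (σ t', y)) (deriv σ t') (u (σ t')) :=
  noether_first_order_general hhom (hFsmooth.of_le ENat.LEInfty.out)
    (hu.differentiable one_ne_zero) (fun x v hv => hinv x v hv v)
    (fun t _ => (contDiff_infty_iff_deriv.1 hσ).2.differentiable (by simp) t) hreg hEL
end

section
/- (Noether's theorem, second order.) Let K : ℝⁿ × ℝⁿ × ℝⁿ → ℝ be a second-order Finsler–Kawaguchi function that is continuous and C^∞ on the open set where y ≠ 0. Let u : ℝⁿ → ℝⁿ be C² and suppose K is infinitesimally invariant under the second-order lift of u: for every (x, y, z) with y ≠ 0, D_xK(x, y, z)(u(x)) + D_yK(x, y, z)(Du(x)(y)) + D_zK(x, y, z)(D²u(x)(y, y) + Du(x)(z)) = 0, where Du(x) is the derivative of u and D²u(x) its second derivative regarded as a symmetric bilinear map ℝⁿ × ℝⁿ → ℝⁿ. Then for every C^∞ curve σ with σ′ ≠ 0 on [t₁, t₂] that satisfies the second-order Euler–Lagrange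 equations of K on [t₁, t₂], the Noether current J(t) := D_yK(σ²(t))(u(σ(t))) + 2·D_zK(σ²(t))(Du(σ(t))(σ′(t))) − d/dt [D_zK(σ²(t))(u(σ(t)))] is constant on [t₁, t₂]. -/
/-!
Differentiating the homogeneity relation `K (x, l • y, l² • z) = l * K (x, y, z)` at `l = 1` gives
`K = D_yK y + 2 D_zK z`, so the two mixed terms of the Euler–Lagrange covector `E₂` add up to
`D_xK`. With `w = u ∘ σ`, the current is `J = D_yK w + 2 D_zK w' - (D_zK w)'`, and the product
rule, together with `w' = Du σ'` and `w'' = D²u (σ', σ') + Du σ''`, gives the off-shell identity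
`J' = L_u K - E₂ (u ∘ σ)`, where `L_u K` is the derivative of `K` along the second-order lift of
`u`. Invariance kills the first term and the Euler–Lagrange equations the second.
-/

open Set Filter
open scoped Topology

namespace FinslerKawaguchi

section Calculus

variable {E F G H : Type*} [NormedAddCommGroup E] [NormedSpace ℝ E] [NormedAddCommGroup F]
  [NormedSpace ℝ F] [NormedAddCommGroup G] [NormedSpace ℝ G] [NormedAddCommGroup H]
  [NormedSpace ℝ H]

theorem fderiv_apply_mid_last {K : E × F × G → H} {x : E} {y : F} {z : G}
    (hK : DifferentiableAt ℝ K (x, y, z)) (b : F) (c : G) :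
    fderiv ℝ K (x, y, z) (0, b, c) =
      fderiv ℝ (fun y' => K (x, y', z)) y b + fderiv ℝ (fun z' => K (x, y, z')) z c := by
  have hmid : HasFDerivAt (fun y' => K (x, y', z)) _ y :=
    hK.hasFDerivAt.comp y ((hasFDerivAt_prodMk_right x (y, z)).comp y (hasFDerivAt_prodMk_left y z))
  have hlast : HasFDerivAt (fun z' => K (x, y, z')) _ z :=
    hK.hasFDerivAt.comp z
      ((hasFDerivAt_prodMk_right x (y, z)).comp z (hasFDerivAt_prodMk_right y z))
  rw [hmid.fderiv, hlast.fderiv]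
  simp [← map_add]

theorem deriv_clm_apply_const {P : ℝ → E →L[ℝ] F} {t : ℝ} (hP : DifferentiableAt ℝ P t) (h : E) :
    deriv (fun s => P s h) t = deriv P t h := by
  simp [deriv_clm_apply hP (differentiableAt_const h)]

theorem deriv_deriv_clm_apply_const {P : ℝ → E →L[ℝ] F} {t : ℝ} (hP : ContDiffAt ℝ 2 P t)
    (h : E) : deriv (deriv fun s => P s h) t = deriv (deriv P) t h := by
  have hfirst : deriv (fun s => P s h) =ᶠ[𝓝 t] fun s => deriv P s h := by
    filter_upwards [hP.eventually (by simp)] with s hs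
    exact deriv_clm_apply_const (hs.differentiableAt (by simp)) h
  have hP' : ContDiffAt ℝ 1 (deriv P) t := hP.derivWithin (by norm_num)
  rw [hfirst.deriv_eq, deriv_clm_apply_const (hP'.differentiableAt (by simp))]

theorem hasDerivAt_secondOrderCurrent {P Q : ℝ → E →L[ℝ] ℝ} {w : ℝ → E} {t : ℝ}
    (hQ : DifferentiableAt ℝ Q t) (hP : ContDiffAt ℝ 2 P t) (hw : ContDiffAt ℝ 2 w t) :
    HasDerivAt (fun s => Q s (w s) + 2 * P s (deriv w s) - deriv (fun r => P r (w r)) s)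
      (Q t (deriv w t) + P t (deriv (deriv w) t)
        + deriv (fun s => Q s (w t)) t - deriv (deriv fun s => P s (w t)) t) t := by
  have hexpand : (fun s => Q s (w s) + 2 * P s (deriv w s) - deriv (fun r => P r (w r)) s)
      =ᶠ[𝓝 t] fun s => Q s (w s) + P s (deriv w s) - deriv P s (w s) := by
    filter_upwards [hP.eventually (by simp), hw.eventually (by simp)] with s hPs hws
    rw [deriv_clm_apply (hPs.differentiableAt (by simp)) (hws.differentiableAt (by simp))]
    ring
  have hP₁ := (hP.differentiableAt (by simp)).hasDerivAt
  have hw₁ := (hw.differentiableAt (by simp)).hasDerivAt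
  have hP₂ := ((hP.derivWithin (m := 1) (by norm_num)).differentiableAt (by simp)).hasDerivAt
  have hw₂ := ((hw.derivWithin (m := 1) (by norm_num)).differentiableAt (by simp)).hasDerivAt
  have hsum := ((hQ.hasDerivAt.clm_apply hw₁).add (hP₁.clm_apply hw₂)).sub (hP₂.clm_apply hw₁)
  rw [deriv_clm_apply_const hQ, deriv_deriv_clm_apply_const hP]
  exact (hsum.congr_of_eventuallyEq hexpand).congr_deriv (by ring)

theorem deriv_comp_eventuallyEq {u : E → F} {σ : ℝ → E} {t : ℝ} (hu : ContDiffAt ℝ 1 u (σ t))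
    (hσ : ContDiffAt ℝ 1 σ t) :
    deriv (u ∘ σ) =ᶠ[𝓝 t] fun s => fderiv ℝ u (σ s) (deriv σ s) := by
  filter_upwards [hσ.continuousAt.eventually (hu.eventually (by simp)),
    hσ.eventually (by simp)] with s hus hσs
  exact fderiv_comp_deriv s (hus.differentiableAt (by simp)) (hσs.differentiableAt (by simp))

theorem deriv_deriv_comp {u : E → F} {σ : ℝ → E} {t : ℝ} (hu : ContDiffAt ℝ 2 u (σ t))
    (hσ : ContDiffAt ℝ 2 σ t) :
    deriv (deriv (u ∘ σ)) t =
      fderiv ℝ (fderiv ℝ u) (σ t) (deriv σ t) (deriv σ t)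
        + fderiv ℝ u (σ t) (deriv (deriv σ) t) := by
  have hDu : DifferentiableAt ℝ (fderiv ℝ u) (σ t) :=
    (hu.fderiv_right (m := 1) (by norm_num)).differentiableAt (by simp)
  have hσ₁ : DifferentiableAt ℝ σ t := hσ.differentiableAt (by simp)
  have hσ₂ : DifferentiableAt ℝ (deriv σ) t :=
    (hσ.derivWithin (m := 1) (by norm_num)).differentiableAt (by simp)
  have hfirst := deriv_comp_eventuallyEq (hu.of_le (by norm_num)) (hσ.of_le (by norm_num))
  rw [hfirst.deriv_eq]
  exact ((hDu.hasFDerivAt.comp_hasDerivAt t hσ₁.hasDerivAt).clm_apply hσ₂.hasDerivAt).deriv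

end Calculus

variable {E : Type*} [NormedAddCommGroup E] [NormedSpace ℝ E] {K : E × E × E → ℝ}
  {u : E → E} {σ : ℝ → E} {t : ℝ}

/-- The scaling part (`ρ = 0`) of the second-order homogeneity condition of a Finsler–Kawaguchi
function. -/
def IsScaleHomogeneous (K : E × E × E → ℝ) : Prop :=
  ∀ (x y z : E) (l : ℝ), 0 < l → K (x, l • y, (l ^ 2) • z) = l * K (x, y, z)

/-- The momentum `D_yK(σ²(t))` conjugate to the velocity. -/
noncomputable def velocityMomentum (K : E × E × E → ℝ) (σ : ℝ → E) (t : ℝ) : E →L[ℝ] ℝ :=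
  fderiv ℝ (fun y => K (σ t, y, deriv (deriv σ) t)) (deriv σ t)

/-- The momentum `D_zK(σ²(t))` conjugate to the acceleration. -/
noncomputable def accelerationMomentum (K : E × E × E → ℝ) (σ : ℝ → E) (t : ℝ) : E →L[ℝ] ℝ :=
  fderiv ℝ (fun z => K (σ t, deriv σ t, z)) (deriv (deriv σ) t)

/-- The second-order Euler–Lagrange covector `E₂(t)(h)` over an arbitrary real normed space; on
Euclidean space it is definitionally `eulerLagrange₂`. -/
noncomputable def eulerLagrangeCovector (K : E × E × E → ℝ) (σ : ℝ → E) (t : ℝ) (h : E) : ℝ :=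
  fderiv ℝ (fun x => fderiv ℝ (fun y => K (x, y, deriv (deriv σ) t)) (deriv σ t)) (σ t) h
      (deriv σ t)
    + 2 * fderiv ℝ (fun x => fderiv ℝ (fun z => K (x, deriv σ t, z)) (deriv (deriv σ) t)) (σ t) h
        (deriv (deriv σ) t)
    - deriv (fun s => velocityMomentum K σ s h) t
    + deriv (deriv fun s => accelerationMomentum K σ s h) t

/-- The derivative of `K` at `(x, y, z)` along the second-order lift of the vector field `u`; it
vanishes identically on `y ≠ 0` when `u` is an infinitesimal symmetry of `K`. -/
noncomputable def secondLiftDeriv (K : E × E × E → ℝ) (u : E → E) (x y z : E) : ℝ :=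
  fderiv ℝ (fun x' => K (x', y, z)) x (u x)
    + fderiv ℝ (fun y' => K (x, y', z)) y (fderiv ℝ u x y)
    + fderiv ℝ (fun z' => K (x, y, z')) z (fderiv ℝ (fderiv ℝ u) x y y + fderiv ℝ u x z)

/-- The Noether current `J` of the vector field `u` along the curve `σ`. -/
noncomputable def noetherCurrent (K : E × E × E → ℝ) (u : E → E) (σ : ℝ → E) (t : ℝ) : ℝ :=
  velocityMomentum K σ t (u (σ t))
    + 2 * accelerationMomentum K σ t (fderiv ℝ u (σ t) (deriv σ t))
    - deriv (fun s => accelerationMomentum K σ s (u (σ s))) t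

theorem IsScaleHomogeneous.euler_identity (hhom : IsScaleHomogeneous K) {x y z : E}
    (hK : DifferentiableAt ℝ K (x, y, z)) :
    K (x, y, z) =
      fderiv ℝ (fun y' => K (x, y', z)) y y + 2 * fderiv ℝ (fun z' => K (x, y, z')) z z := by
  have hray : HasDerivAt (fun l : ℝ => (x, l • y, (l ^ 2) • z)) ((0 : E), y, (2 : ℝ) • z) 1 := by
    have hy : HasDerivAt (fun l : ℝ => l • y) y 1 := by
      simpa using (hasDerivAt_id (1 : ℝ)).smul_const y
    have hz : HasDerivAt (fun l : ℝ => (l ^ 2) • z) ((2 : ℝ) • z) 1 := by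
      simpa using (hasDerivAt_pow 2 (1 : ℝ)).smul_const z
    exact (hasDerivAt_const (1 : ℝ) x).prodMk (hy.prodMk hz)
  have hchain : HasDerivAt (fun l : ℝ => K (x, l • y, (l ^ 2) • z))
      (fderiv ℝ K (x, y, z) (0, y, (2 : ℝ) • z)) 1 :=
    hK.hasFDerivAt.comp_hasDerivAt_of_eq 1 hray (by simp)
  have hscale : HasDerivAt (fun l : ℝ => l * K (x, y, z)) (K (x, y, z)) 1 := by
    simpa using (hasDerivAt_id (1 : ℝ)).mul_const (K (x, y, z))
  have heq : (fun l : ℝ => l * K (x, y, z)) =ᶠ[𝓝 1] fun l => K (x, l • y, (l ^ 2) • z) := by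
    filter_upwards [lt_mem_nhds one_pos] with l hl using (hhom x y z l hl).symm
  calc K (x, y, z) = fderiv ℝ K (x, y, z) (0, y, (2 : ℝ) • z) :=
        hscale.unique (hchain.congr_of_eventuallyEq heq)
    _ = _ := by rw [fderiv_apply_mid_last hK, map_smul, smul_eq_mul]

theorem IsScaleHomogeneous.fderiv_base (hhom : IsScaleHomogeneous K) {x y z : E}
    (hK : ContDiffAt ℝ 2 K (x, y, z)) (h : E) :
    fderiv ℝ (fun x' => K (x', y, z)) x h =
      fderiv ℝ (fun x' => fderiv ℝ (fun y' => K (x', y', z)) y) x h y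
        + 2 * fderiv ℝ (fun x' => fderiv ℝ (fun z' => K (x', y, z')) z) x h z := by
  have heuler : (fun x' => K (x', y, z)) =ᶠ[𝓝 x] fun x' =>
      fderiv ℝ (fun y' => K (x', y', z)) y y + 2 * fderiv ℝ (fun z' => K (x', y, z')) z z := by
    have hslice : ContinuousAt (fun x' : E => (x', y, z)) x := by fun_prop
    filter_upwards [hslice.eventually (hK.eventually (by simp))] with x' hx'
    exact hhom.euler_identity (hx'.differentiableAt (by simp))
  have hDy : DifferentiableAt ℝ (fun x' => fderiv ℝ (fun y' => K (x', y', z)) y) x :=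
    (ContDiffAt.fderiv (m := 1) (hK.comp (x, y)
        (by fun_prop : ContDiffAt ℝ 2 (fun p : E × E => (p.1, p.2, z)) (x, y)))
      contDiffAt_const (by norm_num)).differentiableAt (by simp)
  have hDz : DifferentiableAt ℝ (fun x' => fderiv ℝ (fun z' => K (x', y, z')) z) x :=
    (ContDiffAt.fderiv (m := 1) (hK.comp (x, z)
        (by fun_prop : ContDiffAt ℝ 2 (fun p : E × E => (p.1, y, p.2)) (x, z)))
      contDiffAt_const (by norm_num)).differentiableAt (by simp)
  have hsum := (hDy.hasFDerivAt.clm_apply (hasFDerivAt_const y x)).fun_add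
    ((hDz.hasFDerivAt.clm_apply (hasFDerivAt_const z x)).const_mul 2)
  rw [heuler.fderiv_eq, hsum.fderiv]
  simp

theorem contDiffAt_velocityMomentum {m : WithTop ℕ∞}
    (hK : ContDiffAt ℝ (m + 1) K (σ t, deriv σ t, deriv (deriv σ) t))
    (hσ : ContDiffAt ℝ (m + 1 + 1 + 1) σ t) : ContDiffAt ℝ m (velocityMomentum K σ) t := by
  have hσ₁ : ContDiffAt ℝ (m + 1 + 1) (deriv σ) t := hσ.derivWithin le_rfl
  have hσ₂ : ContDiffAt ℝ (m + 1) (deriv (deriv σ)) t := hσ₁.derivWithin le_rfl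
  have hfreeze : ContDiffAt ℝ (m + 1) (fun p : ℝ × E => (σ p.1, p.2, deriv (deriv σ) p.1))
      (t, deriv σ t) :=
    (hσ.of_le (le_self_add.trans le_self_add)).fst'.prodMk (contDiffAt_snd.prodMk hσ₂.fst')
  exact ContDiffAt.fderiv (hK.comp (t, deriv σ t) hfreeze)
    (hσ₁.of_le (le_self_add.trans le_self_add)) le_rfl

theorem contDiffAt_accelerationMomentum {m : WithTop ℕ∞}
    (hK : ContDiffAt ℝ (m + 1) K (σ t, deriv σ t, deriv (deriv σ) t))
    (hσ : ContDiffAt ℝ (m + 1 + 1) σ t) : ContDiffAt ℝ m (accelerationMomentum K σ) t := by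
  have hσ₁ : ContDiffAt ℝ (m + 1) (deriv σ) t := hσ.derivWithin le_rfl
  have hσ₂ : ContDiffAt ℝ m (deriv (deriv σ)) t := hσ₁.derivWithin le_rfl
  have hfreeze : ContDiffAt ℝ (m + 1) (fun p : ℝ × E => (σ p.1, deriv σ p.1, p.2))
      (t, deriv (deriv σ) t) :=
    (hσ.of_le le_self_add).fst'.prodMk (hσ₁.fst'.prodMk contDiffAt_snd)
  exact ContDiffAt.fderiv (hK.comp (t, deriv (deriv σ) t) hfreeze) hσ₂ le_rfl

theorem noetherCurrent_eventuallyEq (hu : ContDiffAt ℝ 1 u (σ t)) (hσ : ContDiffAt ℝ 1 σ t) :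
    noetherCurrent K u σ =ᶠ[𝓝 t] fun s =>
      velocityMomentum K σ s ((u ∘ σ) s) + 2 * accelerationMomentum K σ s (deriv (u ∘ σ) s)
        - deriv (fun r => accelerationMomentum K σ r ((u ∘ σ) r)) s := by
  filter_upwards [deriv_comp_eventuallyEq hu hσ] with s hs
  rw [hs]
  rfl

theorem hasDerivAt_noetherCurrent (hhom : IsScaleHomogeneous K)
    (hK : ContDiffAt ℝ 3 K (σ t, deriv σ t, deriv (deriv σ) t)) (hu : ContDiffAt ℝ 2 u (σ t))
    (hσ : ContDiffAt ℝ 4 σ t) :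
    HasDerivAt (noetherCurrent K u σ)
      (secondLiftDeriv K u (σ t) (deriv σ t) (deriv (deriv σ) t)
        - eulerLagrangeCovector K σ t (u (σ t))) t := by
  have hQ : ContDiffAt ℝ 1 (velocityMomentum K σ) t :=
    contDiffAt_velocityMomentum (hK.of_le (by norm_num)) (hσ.of_le (by norm_num))
  have hP : ContDiffAt ℝ 2 (accelerationMomentum K σ) t :=
    contDiffAt_accelerationMomentum (hK.of_le (by norm_num)) (hσ.of_le (by norm_num))
  have hσ₂ : ContDiffAt ℝ 2 σ t := hσ.of_le (by norm_num)
  have hu₁ : ContDiffAt ℝ 1 u (σ t) := hu.of_le (by norm_num)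
  have hσ₁ : ContDiffAt ℝ 1 σ t := hσ.of_le (by norm_num)
  have hcurrent := (hasDerivAt_secondOrderCurrent (hQ.differentiableAt (by simp)) hP
    (hu.comp t hσ₂)).congr_of_eventuallyEq (noetherCurrent_eventuallyEq hu₁ hσ₁)
  refine hcurrent.congr_deriv ?_
  rw [(deriv_comp_eventuallyEq hu₁ hσ₁).self_of_nhds, deriv_deriv_comp hu hσ₂, secondLiftDeriv,
    eulerLagrangeCovector, ← hhom.fderiv_base (hK.of_le (by norm_num))]
  simp only [velocityMomentum, accelerationMomentum, Function.comp_apply]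
  ring

end FinslerKawaguchi

open FinslerKawaguchi

theorem noether_second_order_general {E : Type*} [NormedAddCommGroup E] [NormedSpace ℝ E]
    {K : E × E × E → ℝ} (hhom : IsScaleHomogeneous K)
    (hK : ContDiffOn ℝ 3 K {p : E × E × E | p.2.1 ≠ 0})
    {u : E → E} (hu : ContDiff ℝ 2 u)
    (hinv : ∀ x y z : E, y ≠ 0 → secondLiftDeriv K u x y z = 0)
    {t₁ t₂ : ℝ} {σ : ℝ → E} (hσ : ContDiff ℝ 4 σ) (hreg : ∀ t ∈ Icc t₁ t₂, deriv σ t ≠ 0)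
    (hEL : ∀ t ∈ Icc t₁ t₂, ∀ h : E, eulerLagrangeCovector K σ t h = 0) :
    ∀ t ∈ Icc t₁ t₂, ∀ t' ∈ Icc t₁ t₂, noetherCurrent K u σ t = noetherCurrent K u σ t' := by
  have hopen : IsOpen {p : E × E × E | p.2.1 ≠ 0} := isOpen_ne_fun (by fun_prop) (by fun_prop)
  have hJ : ∀ t ∈ Icc t₁ t₂, HasDerivAt (noetherCurrent K u σ) 0 t := by
    intro t ht
    have hKt : ContDiffAt ℝ 3 K (σ t, deriv σ t, deriv (deriv σ) t) :=
      hK.contDiffAt (hopen.mem_nhds (hreg t ht))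
    simpa only [hinv _ _ _ (hreg t ht), hEL t ht, sub_zero] using
      hasDerivAt_noetherCurrent hhom hKt hu.contDiffAt hσ.contDiffAt
  have hconst := constant_of_has_deriv_right_zero
    (fun t ht => (hJ t ht).continuousAt.continuousWithinAt)
    (fun t ht => (hJ t (Ico_subset_Icc_self ht)).hasDerivWithinAt)
  exact fun t ht t' ht' => (hconst t ht).trans (hconst t' ht').symm

/-- **Noether's theorem (second-order mechanics).**  If `K` is infinitesimally invariant under
the second-order lift of a vector field `u`, then along every second-order extremal the Noether
current
`J(t) = D_yK(σ²(t))(u(σ t)) + 2·D_zK(σ²(t))(Du(σ t)(σ′ t)) − d/dt [D_zK(σ²(t))(u(σ t))]`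
is constant. -/
theorem noether_second_order
    (n : ℕ)
    (K : EuclideanSpace ℝ (Fin n) × EuclideanSpace ℝ (Fin n) × EuclideanSpace ℝ (Fin n) → ℝ)
    (hhom : ∀ (x y z : EuclideanSpace ℝ (Fin n)) (l ρ : ℝ), 0 < l →
      K (x, l • y, (l ^ 2) • z + ρ • y) = l * K (x, y, z))
    (hKcont : Continuous K)
    (hKsmooth : ContDiffOn ℝ (⊤ : ℕ∞) K
      {p : EuclideanSpace ℝ (Fin n) × EuclideanSpace ℝ (Fin n) × EuclideanSpace ℝ (Fin n) |
        p.2.1 ≠ 0})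
    (u : EuclideanSpace ℝ (Fin n) → EuclideanSpace ℝ (Fin n)) (hu : ContDiff ℝ 2 u)
    (hinv : ∀ (x y z : EuclideanSpace ℝ (Fin n)), y ≠ 0 →
      fderiv ℝ (fun x' => K (x', y, z)) x (u x)
        + fderiv ℝ (fun y' => K (x, y', z)) y (fderiv ℝ u x y)
        + fderiv ℝ (fun z' => K (x, y, z')) z
            ((fderiv ℝ (fun x' => fderiv ℝ u x') x) y y + fderiv ℝ u x z) = 0)
    (t₁ t₂ : ℝ) (σ : ℝ → EuclideanSpace ℝ (Fin n)) (hσ : ContDiff ℝ (⊤ : ℕ∞) σ)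
    (hreg : ∀ t ∈ Set.Icc t₁ t₂, deriv σ t ≠ 0)
    (hEL : ∀ t ∈ Set.Icc t₁ t₂, ∀ h : EuclideanSpace ℝ (Fin n), eulerLagrange₂ n K σ t h = 0) :
    ∀ t ∈ Set.Icc t₁ t₂, ∀ t' ∈ Set.Icc t₁ t₂,
      (fderiv ℝ (fun y => K (σ t, y, deriv (deriv σ) t)) (deriv σ t) (u (σ t))
        + 2 * fderiv ℝ (fun z => K (σ t, deriv σ t, z)) (deriv (deriv σ) t)
            (fderiv ℝ u (σ t) (deriv σ t))
        - deriv (fun s =>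
            fderiv ℝ (fun z => K (σ s, deriv σ s, z)) (deriv (deriv σ) s) (u (σ s))) t) =
      (fderiv ℝ (fun y => K (σ t', y, deriv (deriv σ) t')) (deriv σ t') (u (σ t'))
        + 2 * fderiv ℝ (fun z => K (σ t', deriv σ t', z)) (deriv (deriv σ) t')
            (fderiv ℝ u (σ t') (deriv σ t'))
        - deriv (fun s =>
            fderiv ℝ (fun z => K (σ s, deriv σ s, z)) (deriv (deriv σ) s) (u (σ s))) t') :=
  noether_second_order_general (fun x y z l hl => by simpa using hhom x y z l 0 hl)
    (hKsmooth.of_le (WithTop.coe_le_coe.2 le_top)) hu hinv (hσ.of_le (WithTop.coe_le_coe.2 le_top))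
    hreg hEL
end

section
/- (Reparameterisation invariance of the second-order Finsler–Kawaguchi length.) Let K : ℝⁿ × ℝⁿ × ℝⁿ → ℝ be a continuous second-order Finsler–Kawaguchi function. Let σ : ℝ → ℝⁿ be C², let s₁ < s₂, and let φ : ℝ → ℝ be C² with φ′(s) > 0 for all s ∈ [s₁, s₂], φ(s₁) = t₁ and φ(s₂) = t₂. Then ∫_{s₁}^{s₂} K((σ ∘ φ)(s), (σ ∘ φ)′(s), (σ ∘ φ)″(s)) ds = ∫_{t₁}^{t₂} K(σ(t), σ′(t), σ″(t)) dt; that is, the second-order Finsler–Kawaguchi length of an arc segment does not change under an orientation-preserving reparameterisation. -/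
open intervalIntegral

/-! By the chain rule, reparameterising `σ` by `φ` turns the second-order data `(x, y, z)` of `σ`
at `φ s` into `(x, λ • y, λ² • z + ρ • y)` with `λ = φ' s` and `ρ = φ'' s`. So homogeneity says that
the integrand is multiplied by `φ' s`, which is exactly the factor in the substitution `t = φ s`.
If merely `φ' ≥ 0`, then `φ'` has a minimum wherever it vanishes, so `φ''` vanishes there too and
the integrand is `K (x, 0, 0) = 0`. -/

section ChainRule

open Filter Topology

variable {𝕜 E : Type*} [NontriviallyNormedField 𝕜] [NormedAddCommGroup E] [NormedSpace 𝕜 E]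
  {σ : 𝕜 → E} {φ : 𝕜 → 𝕜} {s : 𝕜}

theorem deriv_scomp_eventuallyEq (hφ : ∀ᶠ u in 𝓝 s, DifferentiableAt 𝕜 φ u)
    (hσ : ∀ᶠ t in 𝓝 (φ s), DifferentiableAt 𝕜 σ t) :
    deriv (σ ∘ φ) =ᶠ[𝓝 s] fun u ↦ deriv φ u • deriv σ (φ u) := by
  filter_upwards [hφ, hφ.self_of_nhds.continuousAt.eventually hσ] with u hφu hσu
  exact deriv.scomp u hσu hφu

theorem deriv_deriv_scomp (hφ : ∀ᶠ u in 𝓝 s, DifferentiableAt 𝕜 φ u)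
    (hφ' : DifferentiableAt 𝕜 (deriv φ) s) (hσ : ∀ᶠ t in 𝓝 (φ s), DifferentiableAt 𝕜 σ t)
    (hσ' : DifferentiableAt 𝕜 (deriv σ) (φ s)) :
    deriv (deriv (σ ∘ φ)) s =
      (deriv φ s ^ 2) • deriv (deriv σ) (φ s) + deriv (deriv φ) s • deriv σ (φ s) := by
  have hvel : HasDerivAt (fun u ↦ deriv σ (φ u)) (deriv φ s • deriv (deriv σ) (φ s)) s :=
    hσ'.hasDerivAt.scomp s hφ.self_of_nhds.hasDerivAt
  rw [(deriv_scomp_eventuallyEq hφ hσ).deriv_eq, (hφ'.hasDerivAt.fun_smul hvel).deriv, smul_smul,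
    ← sq]

end ChainRule

section FinslerKawaguchi

open Set Filter Topology

/-- A second-order Finsler–Kawaguchi function, the integrand of a second-order length functional:
it scales by `l` when velocities scale by `l > 0` and accelerations change accordingly, `ρ` being
the second derivative of the change of parameter. -/
def IsFinslerKawaguchi {E : Type*} [AddCommGroup E] [Module ℝ E] (K : E × E × E → ℝ) : Prop :=
  ∀ (x y z : E) (l ρ : ℝ), 0 < l → K (x, l • y, (l ^ 2) • z + ρ • y) = l * K (x, y, z)

theorem IsFinslerKawaguchi.apply_zero_zero {E : Type*} [AddCommGroup E] [Module ℝ E]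
    {K : E × E × E → ℝ} (hK : IsFinslerKawaguchi K) (x : E) : K (x, 0, 0) = 0 := by
  have h : K (x, 0, 0) = 2 * K (x, 0, 0) := by
    simpa only [smul_zero, add_zero] using hK x 0 0 2 0 two_pos
  linarith

variable {E : Type*} [NormedAddCommGroup E] [NormedSpace ℝ E]
  {K : E × E × E → ℝ} {σ : ℝ → E} {φ : ℝ → ℝ} {a b s : ℝ}

/-- The second jet of the curve `σ` at time `t`: the point at which a second-order integrand is
evaluated. Where a derivative does not exist, `deriv` makes the entry `0`. -/
noncomputable def secondJet (σ : ℝ → E) (t : ℝ) : E × E × E :=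
  (σ t, deriv σ t, deriv (deriv σ) t)

/-- The second-order Finsler–Kawaguchi length `l^K` of the arc of `σ` from `a` to `b`. As an
interval integral it changes sign when `a` and `b` are exchanged. -/
noncomputable def finslerKawaguchiLength (K : E × E × E → ℝ) (σ : ℝ → E) (a b : ℝ) : ℝ :=
  ∫ t in a..b, K (secondJet σ t)

theorem secondJet_comp (hφ : ∀ᶠ u in 𝓝 s, DifferentiableAt ℝ φ u)
    (hφ' : DifferentiableAt ℝ (deriv φ) s) (hσ : ∀ᶠ t in 𝓝 (φ s), DifferentiableAt ℝ σ t)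
    (hσ' : DifferentiableAt ℝ (deriv σ) (φ s)) :
    secondJet (σ ∘ φ) s =
      (σ (φ s), deriv φ s • deriv σ (φ s),
        (deriv φ s ^ 2) • deriv (deriv σ) (φ s) + deriv (deriv φ) s • deriv σ (φ s)) := by
  rw [secondJet, (deriv_scomp_eventuallyEq hφ hσ).self_of_nhds, deriv_deriv_scomp hφ hφ' hσ hσ',
    Function.comp_apply]

theorem IsFinslerKawaguchi.apply_secondJet_comp (hK : IsFinslerKawaguchi K)
    (hφ : ∀ᶠ u in 𝓝 s, DifferentiableAt ℝ φ u) (hφ' : DifferentiableAt ℝ (deriv φ) s)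
    (hσ : ∀ᶠ t in 𝓝 (φ s), DifferentiableAt ℝ σ t) (hσ' : DifferentiableAt ℝ (deriv σ) (φ s))
    (hnonneg : ∀ᶠ u in 𝓝 s, 0 ≤ deriv φ u) :
    K (secondJet (σ ∘ φ) s) = deriv φ s * K (secondJet σ (φ s)) := by
  rw [secondJet_comp hφ hφ' hσ hσ']
  rcases hnonneg.self_of_nhds.eq_or_lt with hzero | hpos
  · have hmin : IsLocalMin (deriv φ) s := hnonneg.mono fun u hu ↦ hzero.symm.trans_le hu
    simp only [← hzero, hmin.deriv_eq_zero, ne_eq, OfNat.ofNat_ne_zero, not_false_eq_true,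
      zero_pow, zero_smul, add_zero, zero_mul, hK.apply_zero_zero]
  · exact hK _ _ _ _ _ hpos

theorem finsler_kawaguchi_length_reparam_invariant_general (hK : IsFinslerKawaguchi K) {U : Set ℝ}
    (hU : IsOpen U) (hσ : DifferentiableOn ℝ σ U) (hσ' : DifferentiableOn ℝ (deriv σ) U)
    (hφ_cont : ContinuousOn φ (uIcc a b)) (hφ : DifferentiableOn ℝ φ (uIoo a b))
    (hφ' : DifferentiableOn ℝ (deriv φ) (uIoo a b)) (hφU : MapsTo φ (uIoo a b) U)
    (hnonneg : ∀ s ∈ uIoo a b, 0 ≤ deriv φ s) :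
    finslerKawaguchiLength K (σ ∘ φ) a b = finslerKawaguchiLength K σ (φ a) (φ b) := by
  have hnhds {s : ℝ} (hs : s ∈ uIoo a b) : uIoo a b ∈ 𝓝 s := isOpen_Ioo.mem_nhds hs
  calc finslerKawaguchiLength K (σ ∘ φ) a b
      = ∫ s in a..b, deriv φ s * K (secondJet σ (φ s)) := by
        refine integral_congr_uIoo fun s hs ↦ ?_
        have hUs : U ∈ 𝓝 (φ s) := hU.mem_nhds (hφU hs)
        exact hK.apply_secondJet_comp (hφ.eventually_differentiableAt (hnhds hs))
          (hφ'.differentiableAt (hnhds hs)) (hσ.eventually_differentiableAt hUs)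
          (hσ'.differentiableAt hUs) (eventually_of_mem (hnhds hs) hnonneg)
    _ = finslerKawaguchiLength K σ (φ a) (φ b) :=
        integral_deriv_smul_comp_of_deriv_nonneg (g := fun t ↦ K (secondJet σ t)) hφ_cont
          (fun _ hs ↦ (hφ.differentiableAt (hnhds hs)).hasDerivAt) hnonneg

end FinslerKawaguchi

/-- **Reparameterisation invariance of the second-order Finsler–Kawaguchi length.** -/
theorem finsler_kawaguchi_length_reparam_invariant
    (n : ℕ)
    (K : EuclideanSpace ℝ (Fin n) × EuclideanSpace ℝ (Fin n) × EuclideanSpace ℝ (Fin n) → ℝ)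
    (hhom : ∀ (x y z : EuclideanSpace ℝ (Fin n)) (l ρ : ℝ), 0 < l →
      K (x, l • y, (l ^ 2) • z + ρ • y) = l * K (x, y, z))
    (hK : Continuous K)
    (σ : ℝ → EuclideanSpace ℝ (Fin n)) (hσ : ContDiff ℝ 2 σ)
    (s₁ s₂ t₁ t₂ : ℝ) (hs : s₁ < s₂)
    (φ : ℝ → ℝ) (hφ : ContDiff ℝ 2 φ)
    (hφ' : ∀ s ∈ Set.Icc s₁ s₂, 0 < deriv φ s)
    (h₁ : φ s₁ = t₁) (h₂ : φ s₂ = t₂) :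
    (∫ s in s₁..s₂, K ((σ ∘ φ) s, deriv (σ ∘ φ) s, deriv (deriv (σ ∘ φ)) s)) =
      ∫ t in t₁..t₂, K (σ t, deriv σ t, deriv (deriv σ) t) := by
  subst h₁ h₂
  exact finsler_kawaguchi_length_reparam_invariant_general hhom isOpen_univ
    (hσ.differentiable two_ne_zero).differentiableOn hσ.differentiable_deriv_two.differentiableOn
    hφ.continuous.continuousOn (hφ.differentiable two_ne_zero).differentiableOn
    hφ.differentiable_deriv_two.differentiableOn (Set.mapsTo_univ _ _)
    fun s hsm ↦ (hφ' s (Set.uIcc_of_le hs.le ▸ Set.uIoo_subset_uIcc_self hsm)).le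
end

section
/- (Reparameterisation invariance of the Kawaguchi k-area.) Let 1 ≤ k ≤ n and let K : ℝⁿ × ⋀ᵏ(ℝⁿ) → ℝ be a continuous first-order k-areal Kawaguchi function. Let σ : ℝᵏ → ℝⁿ be C¹. Let P, Q ⊂ ℝᵏ be compact rectangles (products of compact intervals), and let φ : ℝᵏ → ℝᵏ be a C¹ map that is injective on Q, maps Q onto P, and satisfies det Dφ(s) > 0 for all s ∈ Q. Then ∫_Q K((σ ∘ φ)(s), D(σ∘φ)(s)(e₁) ∧ ⋯ ∧ D(σ∘φ)(s)(e_k)) ds = ∫_P K(σ(t), Dσ(t)(e₁) ∧ ⋯ ∧ Dσ(t)(e_k)) dt, where both integrals are with respect to Lebesgue measure on ℝᵏ; that is, the Kawaguchi k-area of a k-patch does not change under an orientation-preserving reparameterisation. -/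
/-!
An alternating map in as many variables as the dimension is multiplied by `det A` when all its
arguments are transformed by `A`. Hence, by the chain rule, the lift of `σ ∘ φ` at `s` is
`det Dφ(s)` times the lift of `σ` at `φ s`, and homogeneity of `K` turns this positive factor into
the Jacobian of the change of variables formula.
-/

noncomputable section

/-- The `k`-th exterior power of `ℝⁿ` is a finite-dimensional real vector space. -/
instance extFinite (n k : ℕ) :
    Module.Finite ℝ (⋀[ℝ]^k (EuclideanSpace ℝ (Fin n))) := by
  rw [Module.Finite.iff_fg]
  refine Submodule.FG.pow ?_ k
  rw [LinearMap.range_eq_map]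
  exact Submodule.FG.map _ Module.Finite.fg_top

instance extFree (n k : ℕ) :
    Module.Free ℝ (⋀[ℝ]^k (EuclideanSpace ℝ (Fin n))) :=
  Module.Free.of_divisionRing ℝ _

/-- A linear identification of `⋀ᵏ(ℝⁿ)` with a finite product of copies of `ℝ`, used to endow
it with a norm (and in particular with its canonical topology as a finite-dimensional real
vector space). -/
def extEquiv (n k : ℕ) :
    (⋀[ℝ]^k (EuclideanSpace ℝ (Fin n))) ≃ₗ[ℝ]
      (Module.Free.ChooseBasisIndex ℝ (⋀[ℝ]^k (EuclideanSpace ℝ (Fin n))) → ℝ) :=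
  (Module.Free.chooseBasis ℝ (⋀[ℝ]^k (EuclideanSpace ℝ (Fin n)))).equivFun

instance extNormedAddCommGroup (n k : ℕ) :
    NormedAddCommGroup (⋀[ℝ]^k (EuclideanSpace ℝ (Fin n))) :=
  NormedAddCommGroup.induced _ _ (extEquiv n k).toLinearMap (extEquiv n k).injective

instance extNormedSpace (n k : ℕ) :
    NormedSpace ℝ (⋀[ℝ]^k (EuclideanSpace ℝ (Fin n))) :=
  NormedSpace.induced ℝ _ _ (extEquiv n k).toLinearMap

/-- The wedge `v₁ ∧ ⋯ ∧ v_k ∈ ⋀ᵏ(ℝⁿ)` of a family of `k` vectors, i.e. the image of the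
canonical alternating map `ιMulti` in the `k`-th exterior power. -/
def wedge (n k : ℕ) (v : Fin k → EuclideanSpace ℝ (Fin n)) :
    ⋀[ℝ]^k (EuclideanSpace ℝ (Fin n)) :=
  ⟨ExteriorAlgebra.ιMulti ℝ k v, ExteriorAlgebra.ιMulti_range ℝ k (Set.mem_range_self v)⟩

/-- The multivector lift `σ̂(t) = Dσ(t)(e₁) ∧ ⋯ ∧ Dσ(t)(e_k)` of a map `σ : ℝᵏ → ℝⁿ`. -/
def lift (n k : ℕ) (σ : EuclideanSpace ℝ (Fin k) → EuclideanSpace ℝ (Fin n))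
    (t : EuclideanSpace ℝ (Fin k)) : ⋀[ℝ]^k (EuclideanSpace ℝ (Fin n)) :=
  wedge n k (fun i => fderiv ℝ σ t (EuclideanSpace.single i (1 : ℝ)))

section AlternatingMap

variable {R M N ι : Type*} [CommRing R] [AddCommGroup M] [Module R M] [AddCommGroup N] [Module R N]

theorem alternatingMap_eq_toSpanSingleton_comp_det [Fintype ι] [DecidableEq ι]
    (e : Module.Basis ι R M) (f : M [⋀^ι]→ₗ[R] N) :
    f = (LinearMap.toSpanSingleton R N (f e)).compAlternatingMap e.det := by
  refine e.ext_alternating fun i hi => ?_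
  let τ : Equiv.Perm ι := Equiv.ofBijective i (Finite.injective_iff_bijective.1 hi)
  change f (e ∘ τ) = e.det (e ∘ τ) • f e
  rw [f.map_perm, e.det.map_perm, e.det_self, smul_assoc, one_smul]

theorem alternatingMap_apply_comp_eq_det_smul [Finite ι] (e : Module.Basis ι R M)
    (f : M [⋀^ι]→ₗ[R] N) (A : M →ₗ[R] M) (v : ι → M) :
    f (A ∘ v) = LinearMap.det A • f v := by
  classical
  have := Fintype.ofFinite ι
  rw [alternatingMap_eq_toSpanSingleton_comp_det e f]
  simp only [LinearMap.compAlternatingMap_apply, LinearMap.toSpanSingleton_apply, e.det_comp,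
    mul_smul]

end AlternatingMap

theorem wedge_comp_eq_det_smul {n k : ℕ}
    (L : EuclideanSpace ℝ (Fin k) →ₗ[ℝ] EuclideanSpace ℝ (Fin n))
    (A : EuclideanSpace ℝ (Fin k) →ₗ[ℝ] EuclideanSpace ℝ (Fin k))
    (v : Fin k → EuclideanSpace ℝ (Fin k)) :
    wedge n k (L ∘ A ∘ v) = LinearMap.det A • wedge n k (L ∘ v) :=
  alternatingMap_apply_comp_eq_det_smul (EuclideanSpace.basisFun (Fin k) ℝ).toBasis
    ((exteriorPower.ιMulti ℝ k).compLinearMap L) A v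

theorem lift_comp_eq_det_smul {n k : ℕ}
    {σ : EuclideanSpace ℝ (Fin k) → EuclideanSpace ℝ (Fin n)}
    {φ : EuclideanSpace ℝ (Fin k) → EuclideanSpace ℝ (Fin k)} {s : EuclideanSpace ℝ (Fin k)}
    (hσ : DifferentiableAt ℝ σ (φ s)) (hφ : DifferentiableAt ℝ φ s) :
    lift n k (σ ∘ φ) s = LinearMap.det (fderiv ℝ φ s).toLinearMap • lift n k σ (φ s) := by
  simp only [lift, fderiv_comp s hσ hφ]
  exact wedge_comp_eq_det_smul (fderiv ℝ σ (φ s)).toLinearMap (fderiv ℝ φ s).toLinearMap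
    fun i => EuclideanSpace.single i 1

theorem measurableSet_euclideanSpace_setOf_forall_mem {ι : Type*} [Countable ι] {S : ι → Set ℝ}
    (hS : ∀ i, MeasurableSet (S i)) :
    MeasurableSet {t : EuclideanSpace ℝ ι | ∀ i, t i ∈ S i} := by
  rw [Set.ofPred_forall]
  exact MeasurableSet.iInter fun i => (hS i).preimage (by fun_prop)

theorem kawaguchi_area_reparam_invariant_general {n k : ℕ}
    {F : Type*} [NormedAddCommGroup F] [NormedSpace ℝ F]
    (K : EuclideanSpace ℝ (Fin n) × ⋀[ℝ]^k (EuclideanSpace ℝ (Fin n)) → F)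
    (hhom : ∀ (x : EuclideanSpace ℝ (Fin n)) (w : ⋀[ℝ]^k (EuclideanSpace ℝ (Fin n))) (c : ℝ),
      0 < c → K (x, c • w) = c • K (x, w))
    {σ : EuclideanSpace ℝ (Fin k) → EuclideanSpace ℝ (Fin n)}
    {φ : EuclideanSpace ℝ (Fin k) → EuclideanSpace ℝ (Fin k)}
    {Q : Set (EuclideanSpace ℝ (Fin k))} (hQ : MeasurableSet Q)
    (hσ : ∀ t ∈ φ '' Q, DifferentiableAt ℝ σ t) (hφ : ∀ s ∈ Q, DifferentiableAt ℝ φ s)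
    (hinj : Set.InjOn φ Q)
    (hdet : ∀ s ∈ Q, 0 < LinearMap.det (fderiv ℝ φ s).toLinearMap) :
    (∫ s in Q, K ((σ ∘ φ) s, lift n k (σ ∘ φ) s)) = ∫ t in φ '' Q, K (σ t, lift n k σ t) := by
  rw [MeasureTheory.integral_image_eq_integral_abs_det_fderiv_smul MeasureTheory.volume hQ
    (fun s hs => (hφ s hs).hasFDerivAt.hasFDerivWithinAt) hinj]
  refine MeasureTheory.setIntegral_congr_fun hQ fun s hs => ?_
  calc K ((σ ∘ φ) s, lift n k (σ ∘ φ) s)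
      = K (σ (φ s), LinearMap.det (fderiv ℝ φ s).toLinearMap • lift n k σ (φ s)) := by
        rw [lift_comp_eq_det_smul (hσ _ (Set.mem_image_of_mem φ hs)) (hφ s hs),
          Function.comp_apply]
    _ = (fderiv ℝ φ s).det • K (σ (φ s), lift n k σ (φ s)) := hhom _ _ _ (hdet s hs)
    _ = |(fderiv ℝ φ s).det| • K (σ (φ s), lift n k σ (φ s)) := by
        rw [abs_of_pos (hdet s hs)]

/-- **Reparameterisation invariance of the Kawaguchi `k`-area.**  The Kawaguchi `k`-area of a
`k`-patch does not change under an orientation-preserving reparameterisation. -/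
theorem kawaguchi_area_reparam_invariant
    (n k : ℕ) (hk : 1 ≤ k) (hkn : k ≤ n)
    (K : EuclideanSpace ℝ (Fin n) × ⋀[ℝ]^k (EuclideanSpace ℝ (Fin n)) → ℝ)
    (hhom : ∀ (x : EuclideanSpace ℝ (Fin n)) (w : ⋀[ℝ]^k (EuclideanSpace ℝ (Fin n))) (c : ℝ),
      0 < c → K (x, c • w) = c * K (x, w))
    (hK : Continuous K)
    (σ : EuclideanSpace ℝ (Fin k) → EuclideanSpace ℝ (Fin n)) (hσ : ContDiff ℝ 1 σ)
    (P Q : Set (EuclideanSpace ℝ (Fin k)))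
    (hP : ∃ a b : Fin k → ℝ,
      P = {t : EuclideanSpace ℝ (Fin k) | ∀ i, t i ∈ Set.Icc (a i) (b i)})
    (hQ : ∃ c d : Fin k → ℝ,
      Q = {s : EuclideanSpace ℝ (Fin k) | ∀ i, s i ∈ Set.Icc (c i) (d i)})
    (φ : EuclideanSpace ℝ (Fin k) → EuclideanSpace ℝ (Fin k)) (hφ : ContDiff ℝ 1 φ)
    (hinj : Set.InjOn φ Q) (honto : φ '' Q = P)
    (hdet : ∀ s ∈ Q, 0 < LinearMap.det ((fderiv ℝ φ s).toLinearMap)) :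
    (∫ s in Q, K ((σ ∘ φ) s, lift n k (σ ∘ φ) s)) = ∫ t in P, K (σ t, lift n k σ t) := by
  obtain ⟨c, d, rfl⟩ := hQ
  rw [← honto]
  exact kawaguchi_area_reparam_invariant_general K hhom
    (measurableSet_euclideanSpace_setOf_forall_mem fun _ => measurableSet_Icc)
    (fun t _ => hσ.differentiable one_ne_zero t) (fun s _ => hφ.differentiable one_ne_zero s)
    hinj hdet

end
end

section
/- (The Finsler–Kawaguchi form reproduces the second-order length.) Let K : ℝⁿ × ℝⁿ × ℝⁿ → ℝ be a second-order Finsler–Kawaguchi function whose partial Fréchet derivatives D_yK(x, y, z), D_zK(x, y, z) ∈ (ℝⁿ)* exist for y ≠ 0 and depend continuously on (x, y, z) there. Let σ : ℝ → ℝⁿ be C² with σ′(t) ≠ 0 for all t ∈ [t₁, t₂]. Then ∫_{t₁}^{t₂} [ D_yK(σ(t), σ′(t), σ″(t))(σ′(t)) + 2·D_zK(σ(t), σ′(t), σ″(t))(σ″(t)) ] dt = ∫_{t₁}^{t₂} K(σ(t), σ′(t), σ″(t)) dt; i.e. the integral of the second-order Finsler–Kawaguchi form 𝓚 = (∂K/∂yᵘ)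 dxᵘ + 2(∂K/∂zᵘ) dyᵘ over the second-order lift of the arc segment equals its Finsler–Kawaguchi length. -/
open intervalIntegral

/-!
Differentiating `K (x, l • y, l ^ 2 • z) = l * K (x, y, z)` in `l` at `l = 1` gives the weighted
Euler identity `D_y K (y) + 2 D_z K (z) = K`. Its left-hand side is the Finsler–Kawaguchi form
evaluated on the velocity of the lifted curve, so the two integrands agree pointwise. The chain rule
applies because continuous partial derivatives make `K (x, ·, ·)` jointly differentiable.
-/

open Filter Topology

section PartialDerivatives

variable {𝕜 E₁ E₂ F : Type*} [NontriviallyNormedField 𝕜]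
  [NormedAddCommGroup E₁] [NormedSpace 𝕜 E₁] [NormedAddCommGroup E₂] [NormedSpace 𝕜 E₂]
  [NormedAddCommGroup F] [NormedSpace 𝕜 F] {f : E₁ × E₂ → F} {u : E₁ × E₂}

theorem fderiv_eq_coprod_partial_fderiv (hf : DifferentiableAt 𝕜 f u) :
    fderiv 𝕜 f u =
      (fderiv 𝕜 (fun a => f (a, u.2)) u.1).coprod (fderiv 𝕜 (fun b => f (u.1, b)) u.2) := by
  have h₁ : HasFDerivAt (fun a => f (a, u.2)) (fderiv 𝕜 f u ∘L .inl 𝕜 E₁ E₂) u.1 :=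
    hf.hasFDerivAt.comp u.1 (hasFDerivAt_prodMk_left u.1 u.2)
  have h₂ : HasFDerivAt (fun b => f (u.1, b)) (fderiv 𝕜 f u ∘L .inr 𝕜 E₁ E₂) u.2 :=
    hf.hasFDerivAt.comp u.2 (hasFDerivAt_prodMk_right u.1 u.2)
  rw [h₁.fderiv, h₂.fderiv, ContinuousLinearMap.coprod_comp_inl_inr]

theorem differentiableAt_of_continuousAt_partial_fderiv [IsRCLikeNormedField 𝕜]
    (hd₁ : ∀ᶠ v in 𝓝 u, DifferentiableAt 𝕜 (fun a => f (a, v.2)) v.1)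
    (hd₂ : ∀ᶠ v in 𝓝 u, DifferentiableAt 𝕜 (fun b => f (v.1, b)) v.2)
    (hc₁ : ContinuousAt (fun v : E₁ × E₂ => fderiv 𝕜 (fun a => f (a, v.2)) v.1) u)
    (hc₂ : ContinuousAt (fun v : E₁ × E₂ => fderiv 𝕜 (fun b => f (v.1, b)) v.2) u) :
    DifferentiableAt 𝕜 f u :=
  (hasStrictFDerivAt_uncurry_coprod (f := fun a b => f (a, b))
    (f₁ := fun a b => fderiv 𝕜 (fun a' => f (a', b)) a)
    (f₂ := fun a b => fderiv 𝕜 (fun b' => f (a, b')) b)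
    (hd₁.mono fun _ h => h.hasFDerivAt) (hd₂.mono fun _ h => h.hasFDerivAt)
    hc₁ hc₂).differentiableAt

theorem differentiableAt_fibre_of_continuousOn_partial_fderiv [IsRCLikeNormedField 𝕜]
    {X : Type*} [TopologicalSpace X] {K : X × E₁ × E₂ → F} {U : Set (X × E₁ × E₂)} (hU : IsOpen U)
    (hd₁ : ∀ p ∈ U, DifferentiableAt 𝕜 (fun a => K (p.1, a, p.2.2)) p.2.1)
    (hd₂ : ∀ p ∈ U, DifferentiableAt 𝕜 (fun b => K (p.1, p.2.1, b)) p.2.2)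
    (hc₁ : ContinuousOn (fun p => fderiv 𝕜 (fun a => K (p.1, a, p.2.2)) p.2.1) U)
    (hc₂ : ContinuousOn (fun p => fderiv 𝕜 (fun b => K (p.1, p.2.1, b)) p.2.2) U)
    {x : X} (hx : (x, u) ∈ U) :
    DifferentiableAt 𝕜 (fun v => K (x, v)) u := by
  have hfibre : ContinuousAt (fun v : E₁ × E₂ => (x, v)) u := by fun_prop
  have hmem : U ∈ 𝓝 (x, u) := hU.mem_nhds hx
  have hnear : ∀ᶠ v in 𝓝 u, (x, v) ∈ U := hfibre hmem
  exact differentiableAt_of_continuousAt_partial_fderiv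
    (hnear.mono fun v hv => hd₁ (x, v) hv) (hnear.mono fun v hv => hd₂ (x, v) hv)
    ((hc₁.continuousAt hmem).comp hfibre) ((hc₂.continuousAt hmem).comp hfibre)

end PartialDerivatives

theorem fderiv_apply_eq_of_weighted_homogeneous {E₁ E₂ F : Type*}
    [NormedAddCommGroup E₁] [NormedSpace ℝ E₁] [NormedAddCommGroup E₂] [NormedSpace ℝ E₂]
    [NormedAddCommGroup F] [NormedSpace ℝ F] {f : E₁ × E₂ → F} {y : E₁} {z : E₂} {a b c : ℝ}
    (hf : DifferentiableAt ℝ f (y, z))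
    (hhom : ∀ l : ℝ, 0 < l → f (l ^ a • y, l ^ b • z) = l ^ c • f (y, z)) :
    fderiv ℝ f (y, z) (a • y, b • z) = c • f (y, z) := by
  have hpow (r : ℝ) : HasDerivAt (fun l : ℝ => l ^ r) r 1 := by
    simpa using Real.hasDerivAt_rpow_const (x := 1) (p := r) (.inl one_ne_zero)
  have hcurve : HasDerivAt (fun l : ℝ => (l ^ a • y, l ^ b • z)) (a • y, b • z) 1 :=
    ((hpow a).smul_const y).prodMk ((hpow b).smul_const z)
  have hchain : HasDerivAt (fun l : ℝ => f (l ^ a • y, l ^ b • z))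
      (fderiv ℝ f (y, z) (a • y, b • z)) 1 :=
    hf.hasFDerivAt.comp_hasDerivAt_of_eq 1 hcurve (by simp)
  have hscale : HasDerivAt (fun l : ℝ => f (l ^ a • y, l ^ b • z)) (c • f (y, z)) 1 :=
    ((hpow c).smul_const (f (y, z))).congr_of_eventuallyEq <|
      (lt_mem_nhds one_pos).mono hhom
  exact hchain.unique hscale

section FinslerKawaguchi

variable {E F : Type*} [NormedAddCommGroup E] [NormedSpace ℝ E]
  [NormedAddCommGroup F] [NormedSpace ℝ F] {K : E × E × E → F}

/-- The second-order Finsler–Kawaguchi form `𝓚 = (∂K/∂yᵘ) dxᵘ + 2(∂K/∂zᵘ) dyᵘ`, whose integral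
along a lifted curve is compared with the length. Since `𝓚` has no `dzᵘ` component, it is encoded
as a covector on the pairs `(dx, dy)`; this way pulling it back to the lift of `σ` only involves
`(σ′, σ″)` and no third derivative. -/
noncomputable def finslerKawaguchiForm (K : E × E × E → F) (p : E × E × E) : E × E →L[ℝ] F :=
  (fderiv ℝ (fun y => K (p.1, y, p.2.2)) p.2.1).coprod
    ((2 : ℝ) • fderiv ℝ (fun z => K (p.1, p.2.1, z)) p.2.2)

theorem finslerKawaguchiForm_apply_eq_self {x y z : E}
    (hhom : ∀ l : ℝ, 0 < l → K (x, l • y, l ^ 2 • z) = l • K (x, y, z))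
    (hdiff : DifferentiableAt ℝ (fun v : E × E => K (x, v)) (y, z)) :
    finslerKawaguchiForm K (x, y, z) (y, z) = K (x, y, z) :=
  calc
    finslerKawaguchiForm K (x, y, z) (y, z)
      = fderiv ℝ (fun v : E × E => K (x, v)) (y, z) ((1 : ℝ) • y, (2 : ℝ) • z) := by
        simp [finslerKawaguchiForm, fderiv_eq_coprod_partial_fderiv hdiff]
    _ = (1 : ℝ) • K (x, y, z) :=
        fderiv_apply_eq_of_weighted_homogeneous hdiff fun l hl => by
          simpa only [Real.rpow_one, Real.rpow_two] using hhom l hl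
    _ = K (x, y, z) := one_smul ℝ _

theorem finsler_kawaguchi_form_integral_eq_length_general
    (hhom : ∀ (x y z : E) (l : ℝ), 0 < l → K (x, l • y, l ^ 2 • z) = l • K (x, y, z))
    (hdiff : ∀ x y z : E, y ≠ 0 → DifferentiableAt ℝ (fun v : E × E => K (x, v)) (y, z))
    {t₁ t₂ : ℝ} {σ σ' σ'' : ℝ → E}
    (hσ : ∀ t ∈ Set.uIcc t₁ t₂, HasDerivAt σ (σ' t) t)
    (hσ' : ∀ t ∈ Set.uIcc t₁ t₂, HasDerivAt σ' (σ'' t) t)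
    (hreg : ∀ t ∈ Set.uIcc t₁ t₂, σ' t ≠ 0) :
    ∫ t in t₁..t₂, finslerKawaguchiForm K (σ t, σ' t, σ'' t) (σ' t, σ'' t) =
      ∫ t in t₁..t₂, K (σ t, σ' t, σ'' t) :=
  integral_congr fun t ht => finslerKawaguchiForm_apply_eq_self (hhom (σ t) (σ' t) (σ'' t))
    (hdiff (σ t) (σ' t) (σ'' t) (hreg t ht))

end FinslerKawaguchi

/-- **The Finsler–Kawaguchi form reproduces the second-order length.**  The integral of the
pullback of the second-order Finsler–Kawaguchi form `𝓚 = (∂K/∂yᵘ) dxᵘ + 2(∂K/∂zᵘ) dyᵘ`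
along the second-order lift of an arc segment equals its Finsler–Kawaguchi length. -/
theorem finsler_kawaguchi_form_integral_eq_length
    (n : ℕ)
    (K : EuclideanSpace ℝ (Fin n) × EuclideanSpace ℝ (Fin n) × EuclideanSpace ℝ (Fin n) → ℝ)
    (hhom : ∀ (x y z : EuclideanSpace ℝ (Fin n)) (l ρ : ℝ), 0 < l →
      K (x, l • y, (l ^ 2) • z + ρ • y) = l * K (x, y, z))
    (hdiffy : ∀ (x y z : EuclideanSpace ℝ (Fin n)), y ≠ 0 →
      DifferentiableAt ℝ (fun y' => K (x, y', z)) y)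
    (hdiffz : ∀ (x y z : EuclideanSpace ℝ (Fin n)), y ≠ 0 →
      DifferentiableAt ℝ (fun z' => K (x, y, z')) z)
    (hconty : ContinuousOn
      (fun p : EuclideanSpace ℝ (Fin n) × EuclideanSpace ℝ (Fin n) × EuclideanSpace ℝ (Fin n) =>
        fderiv ℝ (fun y => K (p.1, y, p.2.2)) p.2.1)
      {p : EuclideanSpace ℝ (Fin n) × EuclideanSpace ℝ (Fin n) × EuclideanSpace ℝ (Fin n) |
        p.2.1 ≠ 0})
    (hcontz : ContinuousOn
      (fun p : EuclideanSpace ℝ (Fin n) × EuclideanSpace ℝ (Fin n) × EuclideanSpace ℝ (Fin n) =>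
        fderiv ℝ (fun z => K (p.1, p.2.1, z)) p.2.2)
      {p : EuclideanSpace ℝ (Fin n) × EuclideanSpace ℝ (Fin n) × EuclideanSpace ℝ (Fin n) |
        p.2.1 ≠ 0})
    (t₁ t₂ : ℝ) (ht : t₁ ≤ t₂)
    (σ : ℝ → EuclideanSpace ℝ (Fin n)) (hσ : ContDiff ℝ 2 σ)
    (hreg : ∀ t ∈ Set.Icc t₁ t₂, deriv σ t ≠ 0) :
    (∫ t in t₁..t₂,
        (fderiv ℝ (fun y => K (σ t, y, deriv (deriv σ) t)) (deriv σ t) (deriv σ t)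
          + 2 * fderiv ℝ (fun z => K (σ t, deriv σ t, z)) (deriv (deriv σ) t)
              (deriv (deriv σ) t))) =
      ∫ t in t₁..t₂, K (σ t, deriv σ t, deriv (deriv σ) t) := by
  have hopen : IsOpen {p : EuclideanSpace ℝ (Fin n) × EuclideanSpace ℝ (Fin n) ×
      EuclideanSpace ℝ (Fin n) | p.2.1 ≠ 0} := isOpen_ne_fun (by fun_prop) (by fun_prop)
  rw [← Set.uIcc_of_le ht] at hreg
  exact finsler_kawaguchi_form_integral_eq_length_general
    (fun x y z l hl => by simpa using hhom x y z l 0 hl)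
    (fun _ _ _ hy => differentiableAt_fibre_of_continuousOn_partial_fderiv hopen
      (fun p => hdiffy p.1 p.2.1 p.2.2) (fun p => hdiffz p.1 p.2.1 p.2.2) hconty hcontz hy)
    (fun t _ => (hσ.differentiable two_ne_zero t).hasDerivAt)
    (fun t _ => (hσ.differentiable_deriv_two t).hasDerivAt) hreg
end

section
/- (Zermelo's conditions.) Let n ≥ 1 and let K : ℝⁿ × ℝⁿ × ℝⁿ → ℝ satisfy the second-order homogeneity condition K(x, λ • y, λ² • z + ρ • y) = λ * K(x, y, z) for all λ > 0, ρ ∈ ℝ and all x, y, z. If K is Fréchet differentiable at a point (x, y, z), then Zermelo's conditions hold there: D_yK(x, y, z)(y) + 2·D_zK(x, y, z)(z) = K(x, y, z) and D_zK(x, y, z)(y) = 0, where D_yK(x, y, z), D_zK(x, y, z) ∈ (ℝⁿ)* are the partial Fréchet derivatives of K in its second and third slots. -/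
/-!
Homogeneity fixes the values of `K` along two curves through `(y, z)`. Along `t ↦ (t • y, t² • z)`
it grows linearly, and differentiating at `t = 1` gives the first (Euler-type) condition. Along
`ρ ↦ (y, z + ρ • y)` it is constant, and differentiating at `ρ = 0` gives the second. The base
point `x` is only a parameter.
-/

section ProductDerivatives

open scoped Topology

variable {𝕜 E₁ E₂ F : Type*} [NontriviallyNormedField 𝕜]
  [NormedAddCommGroup E₁] [NormedSpace 𝕜 E₁] [NormedAddCommGroup E₂] [NormedSpace 𝕜 E₂]
  [NormedAddCommGroup F] [NormedSpace 𝕜 F] {f : E₁ × E₂ → F} {y : E₁} {z : E₂}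

theorem fderiv_prod_apply_eq_add (hf : DifferentiableAt 𝕜 f (y, z)) (v : E₁) (w : E₂) :
    fderiv 𝕜 f (y, z) (v, w) =
      fderiv 𝕜 (fun y' ↦ f (y', z)) y v + fderiv 𝕜 (fun z' ↦ f (y, z')) z w := by
  have hy : HasFDerivAt (fun y' ↦ f (y', z)) (fderiv 𝕜 f (y, z) ∘L .inl 𝕜 E₁ E₂) y :=
    hf.hasFDerivAt.comp y (hasFDerivAt_prodMk_left y z)
  have hz : HasFDerivAt (fun z' ↦ f (y, z')) (fderiv 𝕜 f (y, z) ∘L .inr 𝕜 E₁ E₂) z :=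
    hf.hasFDerivAt.comp z (hasFDerivAt_prodMk_right y z)
  simp [hy.fderiv, hz.fderiv, ← map_add]

theorem hasDerivAt_pow_smul_one (m : ℕ) (v : F) :
    HasDerivAt (fun t : 𝕜 ↦ t ^ m • v) ((m : 𝕜) • v) 1 := by
  simpa using (hasDerivAt_pow m (1 : 𝕜)).smul_const v

theorem euler_identity_of_weighted_homogeneous {a b d : ℕ} (hf : DifferentiableAt 𝕜 f (y, z))
    (hhom : ∀ᶠ t : 𝕜 in 𝓝 1, f (t ^ a • y, t ^ b • z) = t ^ d • f (y, z)) :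
    (a : 𝕜) • fderiv 𝕜 (fun y' ↦ f (y', z)) y y + (b : 𝕜) • fderiv 𝕜 (fun z' ↦ f (y, z')) z z =
      (d : 𝕜) • f (y, z) := by
  have hcurve : HasDerivAt (fun t : 𝕜 ↦ (t ^ a • y, t ^ b • z)) ((a : 𝕜) • y, (b : 𝕜) • z) 1 :=
    (hasDerivAt_pow_smul_one a y).prodMk (hasDerivAt_pow_smul_one b z)
  have hchain : HasDerivAt (fun t : 𝕜 ↦ f (t ^ a • y, t ^ b • z))
      (fderiv 𝕜 f (y, z) ((a : 𝕜) • y, (b : 𝕜) • z)) 1 :=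
    hf.hasFDerivAt.comp_hasDerivAt_of_eq 1 hcurve (by simp only [one_pow, one_smul])
  have hscale : HasDerivAt (fun t : 𝕜 ↦ f (t ^ a • y, t ^ b • z)) ((d : 𝕜) • f (y, z)) 1 :=
    (hasDerivAt_pow_smul_one d (f (y, z))).congr_of_eventuallyEq hhom
  rw [← map_smul, ← map_smul, ← fderiv_prod_apply_eq_add hf]
  exact hchain.unique hscale

theorem hasLineDerivAt_zero_of_forall_add_smul_eq {E : Type*} [AddCommGroup E] [Module 𝕜 E]
    {g : E → F} {p v : E} (hg : ∀ t : 𝕜, g (p + t • v) = g p) : HasLineDerivAt 𝕜 g 0 p v := by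
  simp only [HasLineDerivAt, hg, hasDerivAt_const]

end ProductDerivatives

section SecondOrderHomogeneity

open scoped Topology

variable {E F : Type*}

/-- The second-order homogeneity condition on a Finsler–Kawaguchi function restricted to the fibre
over a fixed base point, as a function of the velocity `y` and the acceleration `z`. -/
def IsSecondOrderHomogeneous [AddCommGroup E] [Module ℝ E] [AddCommGroup F] [Module ℝ F]
    (K : E × E → F) : Prop :=
  ∀ (y z : E) (l ρ : ℝ), 0 < l → K (l • y, l ^ 2 • z + ρ • y) = l • K (y, z)

namespace IsSecondOrderHomogeneous

section Algebra

variable [AddCommGroup E] [Module ℝ E] [AddCommGroup F] [Module ℝ F] {K : E × E → F}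

theorem map_smul_sq_smul (hK : IsSecondOrderHomogeneous K) (y z : E) {l : ℝ} (hl : 0 < l) :
    K (l • y, l ^ 2 • z) = l • K (y, z) := by
  simpa using hK y z l 0 hl

theorem map_add_smul (hK : IsSecondOrderHomogeneous K) (y z : E) (ρ : ℝ) :
    K (y, z + ρ • y) = K (y, z) := by
  simpa using hK y z 1 ρ one_pos

end Algebra

variable [NormedAddCommGroup E] [NormedSpace ℝ E] [NormedAddCommGroup F] [NormedSpace ℝ F]
  {K : E × E → F} {y z : E}

theorem fderiv_fst_add_two_smul_fderiv_snd (hK : IsSecondOrderHomogeneous K)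
    (hdiff : DifferentiableAt ℝ K (y, z)) :
    fderiv ℝ (fun y' ↦ K (y', z)) y y + (2 : ℝ) • fderiv ℝ (fun z' ↦ K (y, z')) z z =
      K (y, z) := by
  have hscale : ∀ᶠ l : ℝ in 𝓝 1, K (l ^ 1 • y, l ^ 2 • z) = l ^ 1 • K (y, z) := by
    filter_upwards [lt_mem_nhds one_pos] with l hl
    simpa only [pow_one] using hK.map_smul_sq_smul y z hl
  simpa only [Nat.cast_one, Nat.cast_ofNat, one_smul] using
    euler_identity_of_weighted_homogeneous hdiff hscale

theorem fderiv_snd_apply_eq_zero (hK : IsSecondOrderHomogeneous K)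
    (hdiff : DifferentiableAt ℝ (fun z' ↦ K (y, z')) z) :
    fderiv ℝ (fun z' ↦ K (y, z')) z y = 0 :=
  (hdiff.hasFDerivAt.hasLineDerivAt y).unique
    (hasLineDerivAt_zero_of_forall_add_smul_eq (hK.map_add_smul y z))

end IsSecondOrderHomogeneous

theorem zermelo_conditions_general
    [NormedAddCommGroup E] [NormedSpace ℝ E] [NormedAddCommGroup F] [NormedSpace ℝ F]
    {K : E × E → F} (hK : IsSecondOrderHomogeneous K) {y z : E}
    (hdiff : DifferentiableAt ℝ K (y, z)) :
    fderiv ℝ (fun y' ↦ K (y', z)) y y + (2 : ℝ) • fderiv ℝ (fun z' ↦ K (y, z')) z z = K (y, z)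
      ∧ fderiv ℝ (fun z' ↦ K (y, z')) z y = 0 :=
  ⟨hK.fderiv_fst_add_two_smul_fderiv_snd hdiff,
    hK.fderiv_snd_apply_eq_zero (hdiff.comp z (hasFDerivAt_prodMk_right y z).differentiableAt)⟩

end SecondOrderHomogeneity

/-- **Zermelo's conditions.**  A function `K(x, y, z)` satisfying the second-order homogeneity
condition `K(x, λ•y, λ²•z + ρ•y) = λ·K(x, y, z)` satisfies, at every point of Fréchet
differentiability, `D_yK(x,y,z)(y) + 2·D_zK(x,y,z)(z) = K(x,y,z)` and `D_zK(x,y,z)(y) = 0`. -/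
theorem zermelo_conditions
    (n : ℕ) (hn : 1 ≤ n)
    (K : EuclideanSpace ℝ (Fin n) × EuclideanSpace ℝ (Fin n) × EuclideanSpace ℝ (Fin n) → ℝ)
    (hhom : ∀ (x y z : EuclideanSpace ℝ (Fin n)) (l ρ : ℝ), 0 < l →
      K (x, l • y, (l ^ 2) • z + ρ • y) = l * K (x, y, z))
    (x y z : EuclideanSpace ℝ (Fin n))
    (hdiff : DifferentiableAt ℝ K (x, y, z)) :
    fderiv ℝ (fun y' => K (x, y', z)) y y + 2 * fderiv ℝ (fun z' => K (x, y, z')) z z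
        = K (x, y, z)
      ∧ fderiv ℝ (fun z' => K (x, y, z')) z y = 0 :=
  zermelo_conditions_general (K := fun p ↦ K (x, p)) (hhom x)
    (hdiff.comp (y, z) (hasFDerivAt_prodMk_right x (y, z)).differentiableAt)
end

section
/- (Coordinate invariance of Zermelo's expressions.) Let K̄ : ℝⁿ × ℝⁿ × ℝⁿ → ℝ be C¹ and let χ : ℝⁿ → ℝⁿ be C². Define K(x, y, z) := K̄(χ(x), Dχ(x)(y), Dχ(x)(z) + D²χ(x)(y, y)), where Dχ(x) is the Fréchet derivative of χ at x and D²χ(x) its second derivative regarded as a symmetric bilinear map ℝⁿ × ℝⁿ → ℝⁿ. Then for every (x, y, z), writing x̄ = χ(x), ȳ = Dχ(x)(y), z̄ = Dχ(x)(z) + D²χ(x)(y, y): D_yK(x, y, z)(y) + 2·D_zK(x, y, z)(z) = D_yK̄(x̄, ȳ, z̄)(ȳ) + 2·D_zK̄(x̄, ȳ, z̄)(z̄), and D_zK(x, y, z)(y) = D_zK̄(x̄, ȳ, z̄)(ȳ). Consequently Zermelo's conditions are independent of the choice of coordinates under second-order coordinate transformations. -/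
/-!
For fixed `x`, the Zermelo expressions of `K` are its derivatives along the vector fields `(y, 2z)`
and `(0, y)`, which generate the action `(y, z) ↦ (ty, t²z)`, `(y, z) ↦ (y, z + sy)` of
reparametrizations on the velocity and acceleration of a curve. The fibre map
`(y, z) ↦ (A y, A z + B(y, y))`, `A = Dχ(x)`, `B = D²χ(x)`, induced by a coordinate change `χ`
commutes with reparametrization, so its derivative carries each of the two fields to the
corresponding field on the target, and the chain rule gives the invariance.
-/

section

variable {𝕜 : Type*} [NontriviallyNormedField 𝕜]
  {E : Type*} [NormedAddCommGroup E] [NormedSpace 𝕜 E]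
  {F : Type*} [NormedAddCommGroup F] [NormedSpace 𝕜 F]
  {G : Type*} [NormedAddCommGroup G] [NormedSpace 𝕜 G]

theorem fderiv_slice_fst_apply {L : E × F → G} {p : E × F} (hL : DifferentiableAt 𝕜 L p) (v : E) :
    fderiv 𝕜 (fun y ↦ L (y, p.2)) p.1 v = fderiv 𝕜 L p (v, 0) :=
  have hslice : HasFDerivAt (fun y ↦ L (y, p.2)) ((fderiv 𝕜 L p).comp (.inl 𝕜 E F)) p.1 :=
    HasFDerivAt.comp (g := L) p.1 hL.hasFDerivAt (hasFDerivAt_prodMk_left p.1 p.2)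
  DFunLike.congr_fun hslice.fderiv v

theorem fderiv_slice_snd_apply {L : E × F → G} {p : E × F} (hL : DifferentiableAt 𝕜 L p) (w : F) :
    fderiv 𝕜 (fun z ↦ L (p.1, z)) p.2 w = fderiv 𝕜 L p (0, w) :=
  have hslice : HasFDerivAt (fun z ↦ L (p.1, z)) ((fderiv 𝕜 L p).comp (.inr 𝕜 E F)) p.2 :=
    HasFDerivAt.comp (g := L) p.2 hL.hasFDerivAt (hasFDerivAt_prodMk_right p.1 p.2)
  DFunLike.congr_fun hslice.fderiv w

variable (𝕜) in
/-- The first Zermelo expression `D_y K (y) + 2 D_z K (z)`. Since the base point `x` is never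
differentiated, it is dropped: `L` stands for `K (x, ·, ·)` and `p` for `(y, z)`. -/
noncomputable def zermeloFst (L : E × E → G) (p : E × E) : G :=
  fderiv 𝕜 (fun y ↦ L (y, p.2)) p.1 p.1 + (2 : 𝕜) • fderiv 𝕜 (fun z ↦ L (p.1, z)) p.2 p.2

variable (𝕜) in
/-- The second Zermelo expression `D_z K (y)`, with `L` and `p` as in `zermeloFst`. -/
noncomputable def zermeloSnd (L : E × E → G) (p : E × E) : G :=
  fderiv 𝕜 (fun z ↦ L (p.1, z)) p.2 p.1

variable (𝕜) in
/-- The vector field `(y, 2z)` generating the weighted dilations `(y, z) ↦ (ty, t²z)`, the effect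
on velocity and acceleration of the parameter changes `τ ↦ tτ`. -/
def dilationField (p : E × E) : E × E := (p.1, (2 : 𝕜) • p.2)

/-- The vector field `(0, y)` generating the shears `(y, z) ↦ (y, z + sy)`, the effect on velocity
and acceleration of parameter changes tangent to the identity. -/
def shearField (p : E × E) : E × E := (0, p.1)

theorem zermeloFst_eq_fderiv_dilationField {L : E × E → G} {p : E × E}
    (hL : DifferentiableAt 𝕜 L p) :
    zermeloFst 𝕜 L p = fderiv 𝕜 L p (dilationField 𝕜 p) := by
  rw [zermeloFst, fderiv_slice_fst_apply hL, fderiv_slice_snd_apply hL, ← map_smul, ← map_add]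
  simp [dilationField]

theorem zermeloSnd_eq_fderiv_shearField {L : E × E → G} {p : E × E}
    (hL : DifferentiableAt 𝕜 L p) :
    zermeloSnd 𝕜 L p = fderiv 𝕜 L p (shearField p) :=
  fderiv_slice_snd_apply hL p.1

/-- The map `(y, z) ↦ (A y, A z + B(y, y))` on velocities and accelerations over a fixed base point
`x`. A change of coordinates `χ` induces it with `A = Dχ(x)` and `B = D²χ(x)`; here `A` and `B` are
arbitrary. -/
def secondOrderMap (A : E →L[𝕜] F) (B : E →L[𝕜] E →L[𝕜] F) (p : E × E) : F × F :=
  (A p.1, A p.2 + B p.1 p.1)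

variable (A : E →L[𝕜] F) (B : E →L[𝕜] E →L[𝕜] F)

theorem differentiable_secondOrderMap : Differentiable 𝕜 (secondOrderMap A B) := by
  unfold secondOrderMap
  fun_prop

theorem fderiv_secondOrderMap_apply (p v : E × E) :
    fderiv 𝕜 (secondOrderMap A B) p v = (A v.1, A v.2 + (B p.1 v.1 + B v.1 p.1)) := by
  have hfst : HasFDerivAt Prod.fst (.fst 𝕜 E E) p := hasFDerivAt_fst
  have hquad := B.hasFDerivAt_of_bilinear hfst hfst
  have hmap : HasFDerivAt (secondOrderMap A B) _ p :=
    (A.hasFDerivAt.comp p hfst).prodMk ((A.hasFDerivAt.comp p hasFDerivAt_snd).add hquad)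
  simp [hmap.fderiv]

theorem fderiv_secondOrderMap_dilationField (p : E × E) :
    fderiv 𝕜 (secondOrderMap A B) p (dilationField 𝕜 p) =
      dilationField 𝕜 (secondOrderMap A B p) := by
  simp [fderiv_secondOrderMap_apply, dilationField, secondOrderMap, two_smul]

theorem fderiv_secondOrderMap_shearField (p : E × E) :
    fderiv 𝕜 (secondOrderMap A B) p (shearField p) = shearField (secondOrderMap A B p) := by
  simp [fderiv_secondOrderMap_apply, shearField, secondOrderMap]

theorem zermelo_expressions_coordinate_invariant_general {L : F × F → G} {p : E × E}
    (hL : DifferentiableAt 𝕜 L (secondOrderMap A B p)) :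
    zermeloFst 𝕜 (L ∘ secondOrderMap A B) p = zermeloFst 𝕜 L (secondOrderMap A B p) ∧
      zermeloSnd 𝕜 (L ∘ secondOrderMap A B) p = zermeloSnd 𝕜 L (secondOrderMap A B p) := by
  have hmap : DifferentiableAt 𝕜 (secondOrderMap A B) p := differentiable_secondOrderMap A B p
  have hcomp : DifferentiableAt 𝕜 (L ∘ secondOrderMap A B) p := hL.comp p hmap
  constructor
  · rw [zermeloFst_eq_fderiv_dilationField hcomp, zermeloFst_eq_fderiv_dilationField hL,
      fderiv_comp p hL hmap, ContinuousLinearMap.comp_apply, fderiv_secondOrderMap_dilationField]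
  · rw [zermeloSnd_eq_fderiv_shearField hcomp, zermeloSnd_eq_fderiv_shearField hL,
      fderiv_comp p hL hmap, ContinuousLinearMap.comp_apply, fderiv_secondOrderMap_shearField]

end

/-- **Coordinate invariance of Zermelo's expressions.**  If
`K(x, y, z) = K̄(χ(x), Dχ(x)(y), Dχ(x)(z) + D²χ(x)(y, y))` is the transform of `K̄` under a
second-order coordinate change induced by `χ`, then the two Zermelo expressions computed for
`K` at `(x, y, z)` agree with those computed for `K̄` at the transformed point. -/
theorem zermelo_expressions_coordinate_invariant
    (n : ℕ)
    (Kbar : EuclideanSpace ℝ (Fin n) × EuclideanSpace ℝ (Fin n) × EuclideanSpace ℝ (Fin n) → ℝ)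
    (hKbar : ContDiff ℝ 1 Kbar)
    (χ : EuclideanSpace ℝ (Fin n) → EuclideanSpace ℝ (Fin n)) (hχ : ContDiff ℝ 2 χ)
    (K : EuclideanSpace ℝ (Fin n) × EuclideanSpace ℝ (Fin n) × EuclideanSpace ℝ (Fin n) → ℝ)
    (hKdef : ∀ x y z : EuclideanSpace ℝ (Fin n),
      K (x, y, z) = Kbar (χ x, fderiv ℝ χ x y,
        fderiv ℝ χ x z + (fderiv ℝ (fun x' => fderiv ℝ χ x') x) y y))
    (x y z : EuclideanSpace ℝ (Fin n)) :
    (fderiv ℝ (fun y' => K (x, y', z)) y y + 2 * fderiv ℝ (fun z' => K (x, y, z')) z z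
        = fderiv ℝ (fun y' => Kbar (χ x, y',
              fderiv ℝ χ x z + (fderiv ℝ (fun x' => fderiv ℝ χ x') x) y y))
            (fderiv ℝ χ x y) (fderiv ℝ χ x y)
          + 2 * fderiv ℝ (fun z' => Kbar (χ x, fderiv ℝ χ x y, z'))
              (fderiv ℝ χ x z + (fderiv ℝ (fun x' => fderiv ℝ χ x') x) y y)
              (fderiv ℝ χ x z + (fderiv ℝ (fun x' => fderiv ℝ χ x') x) y y))
      ∧ (fderiv ℝ (fun z' => K (x, y, z')) z y
        = fderiv ℝ (fun z' => Kbar (χ x, fderiv ℝ χ x y, z'))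
            (fderiv ℝ χ x z + (fderiv ℝ (fun x' => fderiv ℝ χ x') x) y y)
            (fderiv ℝ χ x y)) := by
  have hfibre : Differentiable ℝ fun q ↦ Kbar (χ x, q) :=
    (hKbar.differentiable one_ne_zero).comp (by fun_prop)
  simp only [hKdef]
  exact zermelo_expressions_coordinate_invariant_general (fderiv ℝ χ x) (fderiv ℝ (fderiv ℝ χ) x)
    (p := (y, z)) (hfibre _)
end
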